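/- arXiv:2311.03868 — 3 statements merged into one kernel-verified Lean document; each statement's English description precedes it below -/
import Mathlib

section
/- Let P and Q be B-partitions of a standard Borel probability space such that Q is obtained from P by splitting some of its finite classes into smaller parts. If P has the re-randomizing property, then so does Q. -/
open MeasureTheory

/-- The class of the partition (setoid) `s` containing `x`. -/
def Setoid.cls {J : Type*} (s : Setoid J) (x : J) : Set J := {y | s.r x y}

/-- The saturation of a set `A`: the union of all classes of `s` meeting `A`. -/
def Setoid.sat {J : Type*} (s : Setoid J) (A : Set J) : Set J := {x | ∃ y ∈ A, s.r x y}

/-- A partition is a `B`-partition if the saturation of every Borel (measurable) set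
is Borel (measurable). -/
def IsBPartition {J : Type*} [MeasurableSpace J] (s : Setoid J) : Prop :=
  ∀ A : Set J, MeasurableSet A → MeasurableSet (s.sat A)

open scoped Classical

/-- The probability that, picking a `π`-random point and re-randomizing it along `s`
(i.e. replacing it by a uniform random point of its class when that class is finite,
keeping it otherwise), the resulting point lies in `A`. -/
noncomputable def rerandProb {J : Type*} [MeasurableSpace J] (s : Setoid J)
    (π : MeasureTheory.Measure J) (A : Set J) : ℝ :=
  ∫ x, (if (s.cls x).Finite then (Nat.card ↥(s.cls x ∩ A) : ℝ) / (Nat.card ↥(s.cls x))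
        else A.indicator 1 x) ∂π

/-- A partition `s` has the re-randomizing property with respect to `π` if re-randomizing
a `π`-random point along `s` again yields a point distributed according to `π`. -/
def HasRerand {J : Type*} [MeasurableSpace J] (s : Setoid J)
    (π : MeasureTheory.Measure J) : Prop :=
  ∀ A : Set J, MeasurableSet A → rerandProb s π A = (π A).toReal

open ProbabilityTheory Filter
open scoped ENNReal

lemma Setoid.mem_cls_self {J : Type*} (s : Setoid J) (x : J) : x ∈ s.cls x := s.refl' x

lemma Setoid.mem_cls_comm {J : Type*} (s : Setoid J) {x y : J} : y ∈ s.cls x ↔ x ∈ s.cls y :=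
  ⟨s.symm', s.symm'⟩

lemma Setoid.cls_eq_of_mem {J : Type*} (s : Setoid J) {x y : J} (h : y ∈ s.cls x) :
    s.cls y = s.cls x := by
  ext z
  exact ⟨fun hz => s.trans' h hz, fun hz => s.trans' (s.symm' h) hz⟩

lemma Setoid.cls_mono {J : Type*} {s t : Setoid J} (h : s ≤ t) (x : J) : s.cls x ⊆ t.cls x :=
  fun _ hy => h hy

lemma Setoid.mem_sat_iff {J : Type*} (s : Setoid J) {A : Set J} {x : J} :
    x ∈ s.sat A ↔ (s.cls x ∩ A).Nonempty :=
  ⟨fun ⟨y, hA, hy⟩ => ⟨y, hy, hA⟩, fun ⟨y, hy, hA⟩ => ⟨y, hA, hy⟩⟩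

/-- The law of the point obtained by re-randomizing `x` along the partition `s`. -/
noncomputable def rerandLaw {J : Type*} [MeasurableSpace J] (s : Setoid J) (x : J) : Measure J :=
  if (s.cls x).Finite then uniformOn (s.cls x) else Measure.dirac x

lemma uniformOn_cls_apply {J : Type*} [MeasurableSpace J] {s : Setoid J} (x : J)
    {A : Set J} (hA : MeasurableSet A) :
    uniformOn (s.cls x) A = (Measure.count (s.cls x))⁻¹ * Measure.count (s.cls x ∩ A) :=
  cond_apply' hA _

/-- A finite set is separated by finitely many coordinates of an injection into Cantor space. -/
lemma exists_injOn_restrict_fin {J : Type*} {f : J → ℕ → Bool} (hf : Function.Injective f)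
    (T : Finset J) : ∃ m : ℕ, Set.InjOn (fun x (i : Fin m) => f x i) (T : Set J) := by
  have key : ∀ᶠ m : ℕ in atTop, ∀ p ∈ T ×ˢ T,
      (fun i : Fin m => f p.1 i) = (fun i : Fin m => f p.2 i) → p.1 = p.2 := by
    refine (eventually_all_finset _).2 fun p _ => ?_
    by_cases hp : p.1 = p.2
    · exact Eventually.of_forall fun _ _ => hp
    · obtain ⟨i, hi⟩ := Function.ne_iff.1 (hf.ne hp)
      filter_upwards [eventually_gt_atTop i] with m hm h
      exact absurd (congrFun h ⟨i, hm⟩) hi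
  obtain ⟨m, hm⟩ := key.exists
  exact ⟨m, fun x hx y hy h => hm (x, y) (Finset.mk_mem_product hx hy) h⟩

section StandardBorel

variable {J : Type*} [MeasurableSpace J] [StandardBorelSpace J]

/-- The number of points of a measurable set in the class of `x` depends measurably on `x`. -/
lemma IsBPartition.measurable_count {s : Setoid J} (hs : IsBPartition s) {A : Set J}
    (hA : MeasurableSet A) : Measurable fun x => Measure.count (s.cls x ∩ A) := by
  obtain ⟨f, hfm, hf⟩ := MeasurableSpace.measurable_injection_nat_bool_of_countablySeparated J
  let g : (m : ℕ) → J → Fin m → Bool := fun m x i => f x i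
  have hg : ∀ m, Measurable (g m) := fun m => by fun_prop
  have hcls : ∀ x, MeasurableSet (s.cls x) := fun x => by
    convert hs {x} (measurableSet_singleton x) using 1
    ext y
    simp [Setoid.mem_sat_iff, s.mem_cls_comm]
  have key : ∀ x, Measure.count (s.cls x ∩ A) = ⨆ m : ℕ, ∑ c : Fin m → Bool,
      (s.sat (A ∩ g m ⁻¹' {c})).indicator (1 : J → ℝ≥0∞) x := by
    intro x
    apply le_antisymm
    · rw [Measure.count, Measure.sum_apply _ ((hcls x).inter hA), ENNReal.tsum_eq_iSup_sum]
      refine iSup_le fun T => ?_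
      obtain ⟨m, hm⟩ := exists_injOn_restrict_fin hf T
      refine le_trans ?_ (le_iSup _ m)
      have hle : ∀ y ∈ T, Measure.dirac y (s.cls x ∩ A) ≤
          (s.sat (A ∩ g m ⁻¹' {g m y})).indicator (1 : J → ℝ≥0∞) x := by
        intro y _
        rw [Measure.dirac_apply]
        by_cases hy : y ∈ s.cls x ∩ A
        · rw [Set.indicator_of_mem hy, Set.indicator_of_mem]
          · rfl
          · exact s.mem_sat_iff.2 ⟨y, hy.1, hy.2, rfl⟩
        · rw [Set.indicator_of_notMem hy]
          exact zero_le
      refine (Finset.sum_le_sum hle).trans ?_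
      rw [← Finset.sum_image (g := g m)
        (f := fun c => (s.sat (A ∩ g m ⁻¹' {c})).indicator (1 : J → ℝ≥0∞) x) hm]
      exact Finset.sum_le_sum_of_subset (Finset.subset_univ _)
    · refine iSup_le fun m => ?_
      have hsum := sum_measure_preimage_singleton (μ := Measure.count.restrict (s.cls x ∩ A))
        Finset.univ (f := g m) fun c _ => hg m (measurableSet_singleton c)
      simp only [Finset.coe_univ, Set.preimage_univ, Measure.restrict_apply_univ] at hsum
      rw [← hsum]
      refine Finset.sum_le_sum fun c _ => ?_
      refine Set.indicator_apply_le' (fun hx => ?_) (fun _ => zero_le)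
      rw [Measure.restrict_apply (hg m (measurableSet_singleton c))]
      obtain ⟨y, hy, hyA, hyc⟩ := s.mem_sat_iff.1 hx
      calc (1 : ℝ≥0∞) = Measure.count {y} := (Measure.count_singleton y).symm
        _ ≤ Measure.count (g m ⁻¹' {c} ∩ (s.cls x ∩ A)) :=
          measure_mono (Set.singleton_subset_iff.2 ⟨hyc, hy, hyA⟩)
  simp_rw [key]
  exact Measurable.iSup fun m => Finset.measurable_sum _ fun c _ =>
    measurable_one.indicator (hs _ (hA.inter (hg m (measurableSet_singleton c))))

lemma IsBPartition.measurable_rerandLaw {s : Setoid J} (hs : IsBPartition s) :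
    Measurable (rerandLaw s) := by
  refine Measure.measurable_of_measurable_coe _ fun A hA => ?_
  have huniv : Measurable fun x => Measure.count (s.cls x) := by
    simpa using hs.measurable_count MeasurableSet.univ
  have hfin : MeasurableSet {x | (s.cls x).Finite} := by
    simp_rw [← Measure.count_apply_lt_top]
    exact measurableSet_lt huniv measurable_const
  have : (fun x => rerandLaw s x A) = fun x => if (s.cls x).Finite then
      (Measure.count (s.cls x))⁻¹ * Measure.count (s.cls x ∩ A) else A.indicator 1 x := by
    ext x
    unfold rerandLaw
    split_ifs
    · exact uniformOn_cls_apply x hA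
    · exact Measure.dirac_apply' _ hA
  rw [this]
  exact Measurable.ite hfin (huniv.inv.mul (hs.measurable_count hA)) (measurable_one.indicator hA)

instance (s : Setoid J) (x : J) : IsProbabilityMeasure (rerandLaw s x) := by
  unfold rerandLaw
  split_ifs with h
  · exact isProbabilityMeasure_uniformOn h ⟨x, s.mem_cls_self x⟩
  · infer_instance

lemma toReal_rerandLaw_apply (s : Setoid J) (x : J) {A : Set J} (hA : MeasurableSet A) :
    (rerandLaw s x A).toReal = if (s.cls x).Finite then
      (Nat.card ↥(s.cls x ∩ A) : ℝ) / (Nat.card ↥(s.cls x)) else A.indicator 1 x := by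
  unfold rerandLaw
  split_ifs with h
  · have hcount : ∀ {B : Set J}, B.Finite → (Measure.count B).toReal = Nat.card B := by
      intro B hB
      rw [Measure.count_apply_finite B hB, Nat.card_eq_card_finite_toFinset hB]
      simp
    rw [uniformOn_cls_apply x hA, ENNReal.toReal_mul, ENNReal.toReal_inv, hcount h,
      hcount (h.inter_of_left A), div_eq_inv_mul]
  · rw [Measure.dirac_apply' _ hA]
    by_cases hx : x ∈ A <;> simp [hx]

/-- Re-randomizing preserves `π` iff `π` is invariant under the kernel `rerandLaw s`. -/
lemma IsBPartition.hasRerand_iff {s : Setoid J} (hs : IsBPartition s) (π : Measure J)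
    [IsProbabilityMeasure π] : HasRerand s π ↔ π.bind (rerandLaw s) = π := by
  have hprob : ∀ A, MeasurableSet A → rerandProb s π A = (π.bind (rerandLaw s) A).toReal := by
    intro A hA
    rw [Measure.bind_apply hA hs.measurable_rerandLaw.aemeasurable, ← integral_toReal
      (f := fun x => rerandLaw s x A)
      ((Measure.measurable_coe hA).comp hs.measurable_rerandLaw).aemeasurable
      (ae_of_all _ fun x => measure_lt_top _ _)]
    simp_rw [toReal_rerandLaw_apply s _ hA]
    rfl
  have hbind : ∀ A, MeasurableSet A → π.bind (rerandLaw s) A ≠ ∞ := by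
    intro A hA
    rw [Measure.bind_apply hA hs.measurable_rerandLaw.aemeasurable]
    exact ((lintegral_mono fun x => prob_le_one).trans_lt (by simp)).ne
  constructor
  · intro h
    ext A hA
    rw [← ENNReal.toReal_eq_toReal_iff' (hbind A hA) (measure_ne_top π A), ← hprob A hA]
    exact h A hA
  · intro h A hA
    rw [hprob A hA, h]

/-- Re-randomizing each point of a finite `s`-invariant set preserves the counting measure. -/
lemma sum_rerandLaw_apply (s : Setoid J) (F : Finset J) (hF : ∀ x ∈ F, s.cls x ⊆ F) {A : Set J}
    (hA : MeasurableSet A) : ∑ x ∈ F, rerandLaw s x A = Measure.count ((F : Set J) ∩ A) := by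
  have hfin : ∀ x ∈ F, (s.cls x).Finite := fun x hx => F.finite_toSet.subset (hF x hx)
  have hcard : ∀ B : Set J, Measure.count ((F : Set J) ∩ B) = ∑ y ∈ F, B.indicator 1 y := by
    intro B
    have : (F : Set J) ∩ B = ↑(F.filter (· ∈ B)) := by ext; simp
    rw [this, Measure.count_apply_finset]
    simp [Set.indicator_apply]
  have hlaw : ∀ x ∈ F, rerandLaw s x A = ∑ y ∈ F,
      A.indicator 1 y * ((s.cls y).indicator 1 x * (Measure.count (s.cls y))⁻¹) := by
    intro x hx
    have h1 : s.cls x ∩ A = (F : Set J) ∩ (s.cls x ∩ A) :=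
      (Set.inter_eq_right.2 (Set.inter_subset_left.trans (hF x hx))).symm
    rw [rerandLaw, if_pos (hfin x hx), uniformOn_cls_apply x hA, h1, hcard, Finset.mul_sum]
    refine Finset.sum_congr rfl fun y _ => ?_
    by_cases hy : y ∈ s.cls x
    · have hx' := s.mem_cls_comm.1 hy
      rw [s.cls_eq_of_mem hy] at *
      by_cases hyA : y ∈ A <;> simp [hy, hyA, hx']
    · have hx' := mt s.mem_cls_comm.2 hy
      simp [hy, hx']
  rw [Finset.sum_congr rfl hlaw, Finset.sum_comm, hcard]
  refine Finset.sum_congr rfl fun y hy => ?_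
  rw [← Finset.mul_sum, ← Finset.sum_mul, ← hcard, Set.inter_eq_right.2 (hF y hy),
    ENNReal.mul_inv_cancel, mul_one]
  · exact Measure.count_ne_zero ⟨y, s.mem_cls_self y⟩
  · exact (Measure.count_apply_lt_top.2 (hfin y hy)).ne

/-- Re-randomizing along a partition and then along a splitting of its finite classes amounts to
re-randomizing along the coarser partition only. -/
lemma rerandLaw_bind_of_split {P Q : Setoid J} (hQ : IsBPartition Q) (hle : Q ≤ P)
    (hsplit : ∀ x : J, (P.cls x).Infinite → Q.cls x = P.cls x) (x : J) :
    (rerandLaw P x).bind (rerandLaw Q) = rerandLaw P x := by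
  by_cases h : (P.cls x).Finite
  · have hP : rerandLaw P x = uniformOn (P.cls x) := if_pos h
    obtain ⟨F, hF⟩ := h.exists_finset_coe
    ext A hA
    rw [Measure.bind_apply hA hQ.measurable_rerandLaw.aemeasurable, hP, uniformOn_cls_apply x hA,
      uniformOn, ProbabilityTheory.cond, lintegral_smul_measure, smul_eq_mul, ← hF, lintegral_finset]
    simp only [Measure.count_singleton, mul_one]
    rw [sum_rerandLaw_apply Q F _ hA]
    intro y hy
    rw [hF, ← P.cls_eq_of_mem (hF ▸ Finset.mem_coe.2 hy)]
    exact Setoid.cls_mono hle y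
  · have hP : rerandLaw P x = Measure.dirac x := if_neg h
    rw [hP, Measure.dirac_bind hQ.measurable_rerandLaw, rerandLaw, hsplit x h, if_neg h]

end StandardBorel

/-- Let `P` and `Q` be `B`-partitions of a standard Borel probability
space such that `Q` is obtained from `P` by splitting some of its finite classes (i.e. `Q`
refines `P` and coincides with `P` on infinite classes). If `P` has the re-randomizing
property, then so does `Q`. -/
theorem hasRerand_of_split_finite_classes {J : Type*} [MeasurableSpace J]
    [StandardBorelSpace J] (π : MeasureTheory.Measure J) [IsProbabilityMeasure π]
    (P Q : Setoid J) (hP : IsBPartition P) (hQ : IsBPartition Q)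
    (hle : Q ≤ P)
    (hsplit : ∀ x : J, (P.cls x).Infinite → Q.cls x = P.cls x)
    (hre : HasRerand P π) :
    HasRerand Q π := by
  rw [hQ.hasRerand_iff]
  rw [hP.hasRerand_iff] at hre
  have hmeas := hP.measurable_rerandLaw
  calc π.bind (rerandLaw Q) = (π.bind (rerandLaw P)).bind (rerandLaw Q) := by rw [hre]
    _ = π.bind fun x => (rerandLaw P x).bind (rerandLaw Q) :=
      Measure.bind_bind hmeas.aemeasurable hQ.measurable_rerandLaw.aemeasurable
    _ = π := by simp_rw [rerandLaw_bind_of_split hQ hle hsplit, hre]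
end

section
/- If P and Q are B-partitions of a standard Borel probability space both having the re-randomizing property, then their join P∨Q also has the re-randomizing property. -/
open MeasureTheory

open scoped Classical

open ProbabilityTheory
open scoped ENNReal

namespace Setoid

variable {J : Type*} {s r : Setoid J} {x y : J}

theorem mem_cls_self_s8 (s : Setoid J) (x : J) : x ∈ s.cls x := s.refl x

theorem cls_eq_of_mem_s8 (h : y ∈ s.cls x) : s.cls y = s.cls x :=
  Set.ext fun _ ↦ ⟨fun hz ↦ s.trans h hz, fun hz ↦ s.trans (s.symm h) hz⟩

theorem mem_cls_comm_s8 : y ∈ s.cls x ↔ x ∈ s.cls y := ⟨s.symm, s.symm⟩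

theorem cls_subset_cls (h : s ≤ r) (x : J) : s.cls x ⊆ r.cls x := fun _ hy ↦ h hy

/-- The saturation for a join is obtained by saturating alternately for the two partitions. -/
theorem sat_sup (P Q : Setoid J) (A : Set J) :
    (P ⊔ Q).sat A = ⋃ n : ℕ, (fun B ↦ P.sat (Q.sat B))^[n] A := by
  ext x
  simp only [Set.mem_iUnion]
  constructor
  · rintro ⟨y, hy, hxy⟩
    let f : Set J → Set J := fun B ↦ P.sat (Q.sat B)
    let S : Set J := ⋃ n : ℕ, f^[n] A
    have step : ∀ {a b n}, P a b ∨ Q a b → b ∈ f^[n] A → a ∈ f^[n + 1] A := by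
      intro a b n h hb
      rw [Function.iterate_succ_apply']
      rcases h with h | h
      · exact ⟨b, ⟨b, hb, Q.refl b⟩, h⟩
      · exact ⟨a, ⟨b, hb, h⟩, P.refl a⟩
    have inv : ∀ {a b}, (P ⊔ Q) a b → (a ∈ S ↔ b ∈ S) := by
      intro a b h
      rw [Setoid.sup_eq_eqvGen] at h
      induction h with
      | rel a b h =>
        simp only [S, Set.mem_iUnion]
        exact ⟨fun ⟨n, hn⟩ ↦ ⟨n + 1, step (h.imp P.symm Q.symm) hn⟩,
          fun ⟨n, hn⟩ ↦ ⟨n + 1, step h hn⟩⟩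
      | refl => rfl
      | symm _ _ _ ih => exact ih.symm
      | trans _ _ _ _ _ ih₁ ih₂ => exact ih₁.trans ih₂
    exact Set.mem_iUnion.1 ((inv hxy).2 (Set.mem_iUnion.2 ⟨0, hy⟩))
  · rintro ⟨n, hn⟩
    induction n generalizing x with
    | zero => exact ⟨x, hn, (P ⊔ Q).refl x⟩
    | succ n ih =>
      rw [Function.iterate_succ_apply'] at hn
      obtain ⟨y, ⟨z, hz, hyz⟩, hxy⟩ := hn
      obtain ⟨w, hw, hzw⟩ := ih z hz
      have hP : P ≤ P ⊔ Q := le_sup_left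
      have hQ : Q ≤ P ⊔ Q := le_sup_right
      exact ⟨w, hw, (P ⊔ Q).trans (hP hxy) ((P ⊔ Q).trans (hQ hyz) hzw)⟩

/-- A function invariant under two partitions is invariant under their join. -/
theorem eq_of_mem_cls_sup {β : Type*} {P Q : Setoid J} {f : J → β} {x : J}
    (hP : ∀ y ∈ (P ⊔ Q).cls x, ∀ z ∈ P.cls y, f z = f y)
    (hQ : ∀ y ∈ (P ⊔ Q).cls x, ∀ z ∈ Q.cls y, f z = f y) {y : J} (hy : y ∈ (P ⊔ Q).cls x) :
    f y = f x := by
  have key : ∀ {a b}, (P ⊔ Q) a b → a ∈ (P ⊔ Q).cls x → f b = f a := by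
    intro a b h
    rw [Setoid.sup_eq_eqvGen] at h
    induction h with
    | rel a b h => exact fun ha ↦ h.elim (hP a ha b) (hQ a ha b)
    | refl => exact fun _ ↦ rfl
    | symm a b h ih =>
      have h : (P ⊔ Q) a b := by rw [Setoid.sup_eq_eqvGen]; exact h
      exact fun hb ↦ (ih ((P ⊔ Q).trans hb ((P ⊔ Q).symm h))).symm
    | trans a b c h _ ih₁ ih₂ =>
      have h : (P ⊔ Q) a b := by rw [Setoid.sup_eq_eqvGen]; exact h
      exact fun ha ↦ (ih₂ ((P ⊔ Q).trans ha h)).trans (ih₁ ha)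
  exact key hy (mem_cls_self_s8 _ x)

end Setoid

theorem IsBPartition.sup {J : Type*} [MeasurableSpace J] {P Q : Setoid J}
    (hP : IsBPartition P) (hQ : IsBPartition Q) : IsBPartition (P ⊔ Q) := by
  intro A hA
  rw [Setoid.sat_sup]
  refine MeasurableSet.iUnion fun n ↦ ?_
  induction n with
  | zero => exact hA
  | succ n ih =>
    rw [Function.iterate_succ_apply']
    exact hP _ (hQ _ ih)

section Counting

variable {J : Type*} [MeasurableSpace J] [StandardBorelSpace J] {s : Setoid J}

/-- The set of points whose class contains at least `m` points of a given Borel set is Borel. -/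
theorem IsBPartition.measurableSet_le_encard (hs : IsBPartition s) {A : Set J}
    (hA : MeasurableSet A) (m : ℕ) : MeasurableSet {x | (m : ℕ∞) ≤ (s.cls x ∩ A).encard} := by
  obtain ⟨e, he, einj⟩ := MeasurableSpace.measurable_injection_nat_bool_of_countablySeparated J
  let ρ : (n : ℕ) → J → Fin n → Bool := fun n x i ↦ e x i
  have hρ : ∀ n, Measurable (ρ n) := fun n ↦
    measurable_pi_iff.2 fun i ↦ (measurable_pi_apply (i : ℕ)).comp he
  have key : {x | (m : ℕ∞) ≤ (s.cls x ∩ A).encard} =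
      ⋃ n : ℕ, ⋃ g : Fin m ↪ (Fin n → Bool), ⋂ i, s.sat (A ∩ ρ n ⁻¹' {g i}) := by
    ext x
    simp only [Set.mem_ofPred_eq, Set.mem_iUnion, Set.mem_iInter]
    constructor
    · intro h
      obtain ⟨t, ht, htm⟩ := Set.exists_subset_encard_eq h
      have tfin : t.Finite := Set.finite_of_encard_eq_coe htm
      have : ∃ n, Set.InjOn (ρ n) t := by
        have hex : ∀ p : J × J, ∃ k, p.1 ≠ p.2 → e p.1 k ≠ e p.2 k := by
          intro p
          by_cases hp : p.1 = p.2
          · exact ⟨0, fun h ↦ (h hp).elim⟩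
          · obtain ⟨k, hk⟩ := Function.ne_iff.1 (einj.ne hp)
            exact ⟨k, fun _ ↦ hk⟩
        choose k hk using hex
        obtain ⟨N, hN⟩ := ((tfin.prod tfin).image k).bddAbove
        refine ⟨N + 1, fun a ha b hb hab ↦ ?_⟩
        by_contra hne
        have hle : k (a, b) ≤ N := hN ⟨(a, b), ⟨ha, hb⟩, rfl⟩
        exact hk (a, b) hne (congrFun hab ⟨k (a, b), by omega⟩)
      obtain ⟨n, hn⟩ := this
      have hcard : Nat.card t = m := by
        rw [Nat.card_coe_set_eq, Set.ncard_def, htm]; rfl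
      have := tfin.to_subtype
      let φ : Fin m ≃ t := (Finite.equivFinOfCardEq hcard).symm
      refine ⟨n, ⟨fun i ↦ ρ n (φ i), fun i j hij ↦ ?_⟩, fun i ↦ ?_⟩
      · exact φ.injective (Subtype.ext (hn (φ i).2 (φ j).2 hij))
      · exact ⟨φ i, ⟨(ht (φ i).2).2, rfl⟩, (ht (φ i).2).1⟩
    · rintro ⟨n, g, hg⟩
      choose y hy hxy using hg
      have yinj : Function.Injective y := fun i j hij ↦ g.injective <| by
        rw [← show ρ n (y i) = g i from (hy i).2, hij, show ρ n (y j) = g j from (hy j).2]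
      have hsub : Set.range y ⊆ s.cls x ∩ A := by
        rintro _ ⟨i, rfl⟩
        exact ⟨hxy i, (hy i).1⟩
      refine le_trans (le_of_eq ?_) (Set.encard_le_encard hsub)
      rw [← Set.image_univ, yinj.encard_image]
      simp
  rw [key]
  exact .iUnion fun n ↦ .iUnion fun g ↦ .iInter fun i ↦
    hs _ (hA.inter (hρ n (measurableSet_singleton _)))

/-- The number of points of a Borel set in the class of `x` is a Borel function of `x`. -/
theorem IsBPartition.measurable_encard (hs : IsBPartition s) {A : Set J} (hA : MeasurableSet A) :
    Measurable fun x ↦ ((s.cls x ∩ A).encard : ℝ≥0∞) := by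
  have key : (fun x ↦ ((s.cls x ∩ A).encard : ℝ≥0∞)) = fun x ↦ ⨆ m : ℕ,
      {x | (m : ℕ∞) ≤ (s.cls x ∩ A).encard}.indicator (fun _ ↦ (m : ℝ≥0∞)) x := by
    ext x
    apply le_antisymm
    · rcases eq_or_ne (s.cls x ∩ A).encard ⊤ with h | h
      · rw [h, ENat.toENNReal_top, ← ENNReal.iSup_natCast]
        exact iSup_mono fun m ↦ by simp [h]
      · obtain ⟨k, hk⟩ := ENat.ne_top_iff_exists.1 h
        refine le_iSup_of_le k ?_
        simp [← hk]
    · refine iSup_le fun m ↦ ?_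
      by_cases hx : (m : ℕ∞) ≤ (s.cls x ∩ A).encard
      · simpa [hx] using ENat.toENNReal_le.2 hx
      · simp [hx]
  rw [key]
  exact .iSup fun m ↦ measurable_const.indicator (hs.measurableSet_le_encard hA m)

theorem IsBPartition.measurableSet_finite (hs : IsBPartition s) :
    MeasurableSet {x | (s.cls x).Finite} := by
  have h := hs.measurable_encard .univ (measurableSet_singleton ∞).compl
  convert h using 1
  ext x
  simp [Set.encard_eq_top_iff]

end Counting

section Rerand

variable {J : Type*} [MeasurableSpace J] {s r : Setoid J} {x y : J}

/-- The law of the point obtained by re-randomizing `x` along `s`. -/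
noncomputable def Setoid.rerand (s : Setoid J) (x : J) : Measure J :=
  if (s.cls x).Finite then uniformOn (s.cls x) else Measure.dirac x

theorem Setoid.rerand_of_finite (hx : (s.cls x).Finite) : s.rerand x = uniformOn (s.cls x) :=
  if_pos hx

theorem Setoid.rerand_of_infinite (hx : ¬ (s.cls x).Finite) : s.rerand x = Measure.dirac x :=
  if_neg hx

theorem Setoid.rerand_eq_of_mem (hx : (s.cls x).Finite) (hy : y ∈ s.cls x) :
    s.rerand y = s.rerand x := by
  rw [rerand, rerand, cls_eq_of_mem_s8 hy, if_pos hx, if_pos hx]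

variable [MeasurableSingletonClass J]

instance (s : Setoid J) (x : J) : IsProbabilityMeasure (s.rerand x) := by
  rw [Setoid.rerand]
  split_ifs with h
  · exact isProbabilityMeasure_uniformOn h ⟨x, s.mem_cls_self_s8 x⟩
  · infer_instance

theorem Setoid.lintegral_rerand (hx : (s.cls x).Finite) (f : J → ℝ≥0∞) :
    ∫⁻ y, f y ∂s.rerand x = (hx.toFinset.card : ℝ≥0∞)⁻¹ * ∑ y ∈ hx.toFinset, f y := by
  have h := lintegral_finset (μ := Measure.count) hx.toFinset f
  rw [hx.coe_toFinset] at h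
  rw [rerand_of_finite hx, uniformOn, ProbabilityTheory.cond, lintegral_smul_measure, h,
    Measure.count_apply_finite _ hx]
  simp

theorem Setoid.rerand_apply (hx : (s.cls x).Finite) (A : Set J) :
    s.rerand x A = (s.cls x ∩ A).encard / (s.cls x).encard := by
  rw [rerand_of_finite hx, uniformOn, cond_apply hx.measurableSet,
    Measure.count_apply hx.measurableSet, Measure.count_apply (hx.inter_of_left A).measurableSet,
    ENNReal.div_eq_inv_mul]

theorem Setoid.rerand_pos {A : Set J} (hx : (s.cls x).Finite) (hy : y ∈ s.cls x) (hA : y ∈ A) :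
    s.rerand x A ≠ 0 := by
  rw [rerand_apply hx]
  exact ENNReal.div_ne_zero.2 ⟨by
    simpa using (show (s.cls x ∩ A).Nonempty from ⟨y, hy, hA⟩).ne_empty, by
    simpa [Set.encard_eq_top_iff] using hx⟩

theorem Setoid.lintegral_rerand_congr (hx : (s.cls x).Finite) {f g : J → ℝ≥0∞}
    (h : ∀ y ∈ s.cls x, f y = g y) : ∫⁻ y, f y ∂s.rerand x = ∫⁻ y, g y ∂s.rerand x := by
  rw [lintegral_rerand hx, lintegral_rerand hx]
  congr 1
  exact Finset.sum_congr rfl fun y hy ↦ h y (hx.mem_toFinset.1 hy)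

/-- The average of `f` over the class is constant on it, hence can be taken out of averages. -/
theorem Setoid.lintegral_rerand_mul_lintegral (s : Setoid J) (f g : J → ℝ≥0∞) (x : J) :
    ∫⁻ y, f y * ∫⁻ z, g z ∂s.rerand y ∂s.rerand x =
      (∫⁻ y, f y ∂s.rerand x) * ∫⁻ z, g z ∂s.rerand x := by
  by_cases hx : (s.cls x).Finite
  · rw [lintegral_rerand_congr hx (g := fun y ↦ f y * ∫⁻ z, g z ∂s.rerand x) fun y hy ↦ by
      rw [rerand_eq_of_mem hx hy], lintegral_rerand hx, lintegral_rerand hx (f := f), mul_assoc,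
      ← Finset.sum_mul]
  · simp [rerand_of_infinite hx]

/-- Averaging over the classes of a finer partition does not change averages over
the finite classes of a coarser one. -/
theorem Setoid.lintegral_rerand_rerand (h : s ≤ r) (hx : (r.cls x).Finite) (f : J → ℝ≥0∞) :
    ∫⁻ y, ∫⁻ z, f z ∂s.rerand y ∂r.rerand x = ∫⁻ z, f z ∂r.rerand x := by
  rw [lintegral_rerand hx, lintegral_rerand hx]
  congr 1
  have hsub : ∀ {y}, y ∈ r.cls x → s.cls y ⊆ r.cls x := fun hy ↦
    (cls_subset_cls h _).trans (cls_eq_of_mem_s8 hy).subset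
  have hfin : ∀ {y}, y ∈ r.cls x → (s.cls y).Finite := fun hy ↦ hx.subset (hsub hy)
  have inner : ∀ y ∈ hx.toFinset, ∫⁻ z, f z ∂s.rerand y =
      ∑ z ∈ hx.toFinset, if z ∈ s.cls y then ((s.cls z).ncard : ℝ≥0∞)⁻¹ * f z else 0 := by
    intro y hy
    rw [hx.mem_toFinset] at hy
    rw [lintegral_rerand (hfin hy), ← Finset.sum_filter, Finset.mul_sum]
    have : (hx.toFinset.filter (· ∈ s.cls y)) = (hfin hy).toFinset := by
      ext z
      simpa using fun hz ↦ hsub hy hz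
    rw [this]
    refine Finset.sum_congr rfl fun z hz ↦ ?_
    rw [cls_eq_of_mem_s8 ((hfin hy).mem_toFinset.1 hz), Set.ncard_eq_toFinset_card _ (hfin hy)]
  rw [Finset.sum_congr rfl inner, Finset.sum_comm]
  refine Finset.sum_congr rfl fun z hz ↦ ?_
  rw [hx.mem_toFinset] at hz
  have : (hx.toFinset.filter (z ∈ s.cls ·)) = (hfin hz).toFinset := by
    ext y
    simpa [mem_cls_comm_s8 (x := y)] using fun hy ↦ hsub hz hy
  have hne : ((s.cls z).ncard : ℝ≥0∞) ≠ 0 := by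
    simpa using (Set.ncard_pos (hfin hz)).2 ⟨z, s.mem_cls_self_s8 z⟩ |>.ne'
  rw [← Finset.sum_filter, this, Finset.sum_const, ← Set.ncard_eq_toFinset_card _ (hfin hz),
    nsmul_eq_mul, ← mul_assoc, ENNReal.mul_inv_cancel hne (ENNReal.natCast_ne_top _), one_mul]

end Rerand

section Kernel

variable {J : Type*} [MeasurableSpace J] [StandardBorelSpace J] {s : Setoid J}
  {π ν : Measure J}

theorem IsBPartition.measurable_rerand (hs : IsBPartition s) : Measurable s.rerand := by
  refine Measure.measurable_of_measurable_coe _ fun A hA ↦ ?_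
  have : (fun x ↦ s.rerand x A) = fun x ↦ if x ∈ {x | (s.cls x).Finite} then
      ((s.cls x ∩ A).encard / (s.cls x ∩ Set.univ).encard : ℝ≥0∞) else A.indicator 1 x := by
    ext x
    by_cases hx : (s.cls x).Finite
    · simp [Setoid.rerand_apply hx, hx]
    · simp [Setoid.rerand_of_infinite hx, hx, Measure.dirac_apply' _ hA]
  rw [this]
  exact Measurable.ite hs.measurableSet_finite
    ((hs.measurable_encard hA).div (hs.measurable_encard .univ)) (measurable_one.indicator hA)

theorem rerandProb_eq [IsFiniteMeasure π] (hs : IsBPartition s) {A : Set J}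
    (hA : MeasurableSet A) : rerandProb s π A = (π.bind s.rerand A).toReal := by
  have hm : Measurable fun x ↦ s.rerand x A :=
    (Measure.measurable_coe hA).comp hs.measurable_rerand
  rw [Measure.bind_apply hA hs.measurable_rerand.aemeasurable,
    ← integral_toReal hm.aemeasurable (.of_forall fun x ↦ measure_lt_top _ _), rerandProb]
  congr 1
  ext x
  split_ifs with hx
  · have htoNat : ∀ n : ℕ∞, (n.toNat : ℝ) = (n : ℝ≥0∞).toReal := fun n ↦ by cases n <;> simp
    simp [Setoid.rerand_apply hx, Set.ncard_def, Nat.card_coe_set_eq, htoNat]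
  · rw [Setoid.rerand_of_infinite hx, Measure.dirac_apply' _ hA]
    by_cases hxA : x ∈ A <;> simp [hxA]

/-- The re-randomizing property says that `π` is invariant under re-randomization. -/
theorem hasRerand_iff_bind_eq [IsFiniteMeasure π] (hs : IsBPartition s) :
    HasRerand s π ↔ π.bind s.rerand = π := by
  have hfin : ∀ A, MeasurableSet A → π.bind s.rerand A ≠ ∞ := by
    intro A hA
    rw [Measure.bind_apply hA hs.measurable_rerand.aemeasurable]
    exact ((lintegral_mono fun x ↦ prob_le_one (μ := s.rerand x)).trans_lt (by simp)).ne
  constructor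
  · intro h
    ext A hA
    exact (ENNReal.toReal_eq_toReal_iff' (hfin A hA) (measure_ne_top π A)).1
      ((rerandProb_eq hs hA).symm.trans (h A hA))
  · intro h A hA
    rw [rerandProb_eq hs hA, h]

theorem IsBPartition.lintegral_bind (hs : IsBPartition s) (ν : Measure J) {f : J → ℝ≥0∞}
    (hf : Measurable f) : ∫⁻ x, f x ∂ν.bind s.rerand = ∫⁻ x, ∫⁻ y, f y ∂s.rerand x ∂ν :=
  Measure.lintegral_bind hs.measurable_rerand.aemeasurable hf.aemeasurable

theorem IsBPartition.measurable_lintegral_rerand (hs : IsBPartition s) {f : J → ℝ≥0∞}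
    (hf : Measurable f) : Measurable fun x ↦ ∫⁻ y, f y ∂s.rerand x :=
  (Measure.measurable_lintegral hf).comp hs.measurable_rerand

/-- Averaging over classes is self-adjoint for an invariant measure. -/
theorem IsBPartition.lintegral_mul_lintegral_comm (hs : IsBPartition s)
    (hν : ν.bind s.rerand = ν) {f g : J → ℝ≥0∞} (hf : Measurable f) (hg : Measurable g) :
    ∫⁻ x, f x * ∫⁻ y, g y ∂s.rerand x ∂ν = ∫⁻ x, (∫⁻ y, f y ∂s.rerand x) * g x ∂ν := by
  have key : ∀ {f g : J → ℝ≥0∞}, Measurable f → Measurable g →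
      ∫⁻ x, f x * ∫⁻ y, g y ∂s.rerand x ∂ν =
        ∫⁻ x, (∫⁻ y, f y ∂s.rerand x) * ∫⁻ y, g y ∂s.rerand x ∂ν := by
    intro f g hf hg
    conv_lhs => rw [← hν]
    rw [hs.lintegral_bind ν (hf.fun_mul (hs.measurable_lintegral_rerand hg))]
    simp_rw [Setoid.lintegral_rerand_mul_lintegral]
  rw [key hf hg]
  simp_rw [mul_comm _ (g _)]
  rw [key hg hf]
  simp_rw [mul_comm]

/-- Invariance passes to the restriction to a saturated Borel set. -/
theorem IsBPartition.bind_restrict (hs : IsBPartition s) (hπ : π.bind s.rerand = π) {S : Set J}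
    (hS : MeasurableSet S) (hsat : ∀ x ∈ S, ∀ y ∈ s.cls x, y ∈ S) :
    (π.restrict S).bind s.rerand = π.restrict S := by
  ext A hA
  rw [Measure.bind_apply hA hs.measurable_rerand.aemeasurable, Measure.restrict_apply hA]
  conv_rhs => rw [← hπ]
  rw [Measure.bind_apply (hA.inter hS) hs.measurable_rerand.aemeasurable, ← lintegral_indicator hS]
  refine lintegral_congr fun x ↦ ?_
  have hiff : ∀ y ∈ s.cls x, (y ∈ S ↔ x ∈ S) := fun y hy ↦
    ⟨fun h ↦ hsat y h x (Setoid.mem_cls_comm_s8.1 hy), fun h ↦ hsat x h y hy⟩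
  by_cases hfin : (s.cls x).Finite
  · rw [Setoid.rerand_apply hfin]
    by_cases hx : x ∈ S
    · rw [Set.indicator_of_mem hx, Setoid.rerand_apply hfin]
      congr 3
      ext y
      simpa using fun hy _ ↦ (hiff y hy).2 hx
    · have : s.cls x ∩ (A ∩ S) = ∅ := by
        ext y
        simpa using fun hy _ hyS ↦ hx ((hiff y hy).1 hyS)
      simp [hx, this]
  · rw [Setoid.rerand_of_infinite hfin, Measure.dirac_apply' _ (hA.inter hS)]
    by_cases hx : x ∈ S <;> by_cases hxA : x ∈ A <;>
      simp [hx, hxA, Setoid.rerand_of_infinite hfin, Measure.dirac_apply' _ hA]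

end Kernel

section Join

variable {J : Type*} [MeasurableSpace J] [StandardBorelSpace J] {s r P Q : Setoid J}
  {π ν : Measure J}

theorem bind_bind_rerand_of_le (hs : IsBPartition s) (hr : IsBPartition r) (h : s ≤ r)
    (hν : ∀ᵐ x ∂ν, (r.cls x).Finite) :
    (ν.bind r.rerand).bind s.rerand = ν.bind r.rerand := by
  ext A hA
  have hm := measurable_one.indicator (f := (1 : J → ℝ≥0∞)) hA
  rw [← lintegral_indicator_one hA, ← lintegral_indicator_one hA, hs.lintegral_bind _ hm,
    hr.lintegral_bind _ (hs.measurable_lintegral_rerand hm), hr.lintegral_bind _ hm]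
  exact lintegral_congr_ae (hν.mono fun x hx ↦ Setoid.lintegral_rerand_rerand h hx _)

theorem absolutelyContinuous_bind_rerand (hr : IsBPartition r)
    (hν : ∀ᵐ x ∂ν, (r.cls x).Finite) : ν ≪ ν.bind r.rerand := by
  refine Measure.AbsolutelyContinuous.mk fun A hA h ↦ ?_
  rw [Measure.bind_apply hA hr.measurable_rerand.aemeasurable,
    lintegral_eq_zero_iff (f := fun x ↦ r.rerand x A)
      ((Measure.measurable_coe hA).comp hr.measurable_rerand)] at h
  rw [measure_eq_zero_iff_ae_notMem]
  filter_upwards [h, hν] with x hx hfin hxA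
  exact Setoid.rerand_pos hfin (r.mem_cls_self_s8 x) hxA hx

/-- The density of an invariant measure with respect to another one is almost everywhere equal
to its average over classes. -/
theorem rnDeriv_ae_eq_lintegral_rerand {μ : Measure J} [IsFiniteMeasure μ] [IsFiniteMeasure ν]
    (hs : IsBPartition s) (hμ : μ.bind s.rerand = μ) (hν : ν.bind s.rerand = ν) (hνμ : ν ≪ μ) :
    ν.rnDeriv μ =ᵐ[μ] fun x ↦ ∫⁻ y, ν.rnDeriv μ y ∂s.rerand x := by
  have hd := Measure.measurable_rnDeriv ν μ
  refine ae_eq_of_forall_setLIntegral_eq_of_sigmaFinite hd (hs.measurable_lintegral_rerand hd)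
    fun A hA _ ↦ ?_
  have hm := measurable_one.indicator (f := (1 : J → ℝ≥0∞)) hA
  calc ∫⁻ x in A, ν.rnDeriv μ x ∂μ = ∫⁻ x, A.indicator 1 x ∂ν := by
        rw [Measure.setLIntegral_rnDeriv hνμ, lintegral_indicator_one hA]
    _ = ∫⁻ x, ∫⁻ y, A.indicator 1 y ∂s.rerand x ∂ν := by
        conv_lhs => rw [← hν]
        exact hs.lintegral_bind _ hm
    _ = ∫⁻ x, ν.rnDeriv μ x * ∫⁻ y, A.indicator 1 y ∂s.rerand x ∂μ :=
        (lintegral_rnDeriv_mul hνμ (hs.measurable_lintegral_rerand hm).aemeasurable).symm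
    _ = ∫⁻ x, (∫⁻ y, ν.rnDeriv μ y ∂s.rerand x) * A.indicator 1 x ∂μ :=
        hs.lintegral_mul_lintegral_comm hμ hd hm
    _ = ∫⁻ x in A, ∫⁻ y, ν.rnDeriv μ y ∂s.rerand x ∂μ := by
        rw [← lintegral_indicator hA]
        refine lintegral_congr fun x ↦ ?_
        by_cases hx : x ∈ A <;> simp [hx]

/-- For an invariant measure, almost every point with finite class has a class on which
a given almost sure property holds everywhere. -/
theorem ae_forall_mem_cls {μ : Measure J} (hr : IsBPartition r) (hμ : μ.bind r.rerand = μ)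
    (hfin : ∀ᵐ x ∂μ, (r.cls x).Finite) {p : J → Prop} (hp : ∀ᵐ x ∂μ, p x) :
    ∀ᵐ x ∂μ, ∀ y ∈ r.cls x, p y := by
  rw [← hμ] at hp
  filter_upwards [Measure.ae_ae_of_ae_bind hr.measurable_rerand.aemeasurable hp, hfin]
    with x hx hx' y hy
  by_contra hpy
  exact Setoid.rerand_pos hx' hy hpy hx

theorem bind_rerand_sup_of_ae_finite [IsFiniteMeasure ν] (hP : IsBPartition P)
    (hQ : IsBPartition Q) (hνP : ν.bind P.rerand = ν) (hνQ : ν.bind Q.rerand = ν)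
    (hν : ∀ᵐ x ∂ν, ((P ⊔ Q).cls x).Finite) : ν.bind (P ⊔ Q).rerand = ν := by
  have hR := hP.sup hQ
  set R := P ⊔ Q
  set μ := ν.bind R.rerand
  have hμP : μ.bind P.rerand = μ := bind_bind_rerand_of_le hP hR le_sup_left hν
  have hμQ : μ.bind Q.rerand = μ := bind_bind_rerand_of_le hQ hR le_sup_right hν
  have hμR : μ.bind R.rerand = μ := bind_bind_rerand_of_le hR hR le_rfl hν
  have hνμ : ν ≪ μ := absolutelyContinuous_bind_rerand hR hν
  have hμfin : IsFiniteMeasure μ := ⟨by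
    rw [Measure.bind_apply .univ hR.measurable_rerand.aemeasurable]
    simp⟩
  have hμF : ∀ᵐ x ∂μ, (R.cls x).Finite := by
    have hF : MeasurableSet {x | (R.cls x).Finite}ᶜ := hR.measurableSet_finite.compl
    change μ {x | (R.cls x).Finite}ᶜ = 0
    rw [Measure.bind_apply hF hR.measurable_rerand.aemeasurable]
    refine (lintegral_congr_ae (hν.mono fun x hx ↦ ?_)).trans lintegral_zero
    have : R.cls x ∩ {x | (R.cls x).Finite}ᶜ = ∅ := by
      ext y
      simpa using fun hy ↦ by rwa [Setoid.cls_eq_of_mem_s8 hy]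
    simp [Setoid.rerand_apply hx, this]
  set d := ν.rnDeriv μ
  have hd : Measurable d := Measure.measurable_rnDeriv ν μ
  have hdR : ∀ᵐ x ∂μ, ∫⁻ y, d y ∂(R.rerand x) = d x := by
    filter_upwards [hμF,
      ae_forall_mem_cls hR hμR hμF (rnDeriv_ae_eq_lintegral_rerand hP hμP hνP hνμ),
      ae_forall_mem_cls hR hμR hμF (rnDeriv_ae_eq_lintegral_rerand hQ hμQ hνQ hνμ)]
      with x hx hxP hxQ
    have inv : ∀ {s : Setoid J}, s ≤ R → (∀ y ∈ R.cls x, d y = ∫⁻ z, d z ∂s.rerand y) →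
        ∀ y ∈ R.cls x, ∀ z ∈ s.cls y, d z = d y := by
      intro s hs h y hy z hz
      have hsub := (Setoid.cls_subset_cls hs y).trans (Setoid.cls_eq_of_mem_s8 hy).subset
      rw [h y hy, h z (hsub hz), Setoid.rerand_eq_of_mem (hx.subset hsub) hz]
    rw [Setoid.lintegral_rerand_congr hx (g := fun _ ↦ d x) fun y hy ↦
      Setoid.eq_of_mem_cls_sup (inv le_sup_left hxP) (inv le_sup_right hxQ) hy]
    simp
  ext A hA
  have hm := measurable_one.indicator (f := (1 : J → ℝ≥0∞)) hA
  rw [← lintegral_indicator_one hA, ← lintegral_indicator_one hA]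
  calc ∫⁻ x, A.indicator 1 x ∂μ = ∫⁻ x, ∫⁻ y, A.indicator 1 y ∂(R.rerand x) ∂ν :=
        hR.lintegral_bind _ hm
    _ = ∫⁻ x, d x * ∫⁻ y, A.indicator 1 y ∂(R.rerand x) ∂μ :=
        (lintegral_rnDeriv_mul hνμ (hR.measurable_lintegral_rerand hm).aemeasurable).symm
    _ = ∫⁻ x, (∫⁻ y, d y ∂(R.rerand x)) * A.indicator 1 x ∂μ :=
        hR.lintegral_mul_lintegral_comm hμR hd hm
    _ = ∫⁻ x, d x * A.indicator 1 x ∂μ :=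
        lintegral_congr_ae (hdR.mono fun x hx ↦ by simp only [hx])
    _ = ∫⁻ x, A.indicator 1 x ∂ν := lintegral_rnDeriv_mul hνμ hm.aemeasurable

/-- A finite measure invariant under re-randomization along two partitions is invariant under
re-randomization along their join. -/
theorem bind_rerand_sup [IsFiniteMeasure π] (hP : IsBPartition P) (hQ : IsBPartition Q)
    (hπP : π.bind P.rerand = π) (hπQ : π.bind Q.rerand = π) : π.bind (P ⊔ Q).rerand = π := by
  have hR := hP.sup hQ
  set F := {x | ((P ⊔ Q).cls x).Finite}
  have hF : MeasurableSet F := hR.measurableSet_finite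
  have hsat : ∀ {s : Setoid J}, s ≤ P ⊔ Q → ∀ x ∈ F, ∀ y ∈ s.cls x, y ∈ F := by
    intro s hs x hx y hy
    change ((P ⊔ Q).cls y).Finite
    rwa [Setoid.cls_eq_of_mem_s8 (hs hy)]
  have hfinite := bind_rerand_sup_of_ae_finite hP hQ
    (hP.bind_restrict hπP hF (hsat le_sup_left)) (hQ.bind_restrict hπQ hF (hsat le_sup_right))
    (ae_restrict_mem hF)
  ext A hA
  have hm := hR.measurable_rerand
  have h := congrArg (· A) hfinite
  simp only [Measure.bind_apply hA hm.aemeasurable, Measure.restrict_apply hA] at h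
  rw [Measure.bind_apply hA hm.aemeasurable, ← lintegral_add_compl _ hF, h,
    setLIntegral_congr_fun (g := A.indicator 1) hF.compl fun x hx ↦ by
      rw [Setoid.rerand_of_infinite hx, Measure.dirac_apply' _ hA],
    lintegral_indicator_one hA, Measure.restrict_apply hA, ← Set.sdiff_eq,
    measure_inter_add_sdiff _ hF]

end Join

/-- If `P` and `Q` are `B`-partitions of a standard Borel probability
space, both having the re-randomizing property, then their join `P ⊔ Q` also has the
re-randomizing property. -/
theorem hasRerand_join {J : Type*} [MeasurableSpace J] [StandardBorelSpace J]
    (π : MeasureTheory.Measure J) [IsProbabilityMeasure π]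
    (P Q : Setoid J) (hP : IsBPartition P) (hQ : IsBPartition Q)
    (hreP : HasRerand P π) (hreQ : HasRerand Q π) :
    HasRerand (P ⊔ Q) π := by
  rw [hasRerand_iff_bind_eq hP] at hreP
  rw [hasRerand_iff_bind_eq hQ] at hreQ
  exact (hasRerand_iff_bind_eq (hP.sup hQ)).2 (bind_rerand_sup hP hQ hreP hreQ)
end

section
/- For a graphing G = (J,B,E,λ), the normalized rank function ρ(X) = 1 − E_u(1/|V(G^X_u)|) on Borel subsets X of E is increasing and submodular: ρ(X∪Y) + ρ(X∩Y) ≤ ρ(X) + ρ(Y). -/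
open MeasureTheory

/-- A graphing: a bounded-degree Borel graph `(J, E)` on a standard Borel space together
with a probability measure `μ` satisfying the measure-preservation (intrinsic
mass-transport) equation `∫_A deg_B = ∫_B deg_A`. -/
structure Graphing (J : Type*) [MeasurableSpace J] where
  /-- the (symmetric) adjacency relation -/
  E : J → J → Prop
  symm : ∀ x y, E x y → E y x
  measE : MeasurableSet {p : J × J | E p.1 p.2}
  /-- the underlying probability measure -/
  μ : Measure J
  prob : IsProbabilityMeasure μ
  /-- the degree bound -/
  D : ℕ
  degFin : ∀ x, {y | E x y}.Finite
  degBound : ∀ x, ({y | E x y}).ncard ≤ D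
  mp : ∀ A B : Set J, MeasurableSet A → MeasurableSet B →
    ∫ x in A, (({y ∈ B | E x y}).ncard : ℝ) ∂μ = ∫ x in B, (({y ∈ A | E x y}).ncard : ℝ) ∂μ

namespace Graphing

variable {J : Type*} [MeasurableSpace J]

/-- The edge set of a graphing, as a (symmetric) set of ordered pairs. -/
def edgeSet (G : Graphing J) : Set (J × J) := {p | G.E p.1 p.2}

/-- A Borel symmetric subset of the edge set of `G`. -/
def IsEdgeSubset (G : Graphing J) (X : Set (J × J)) : Prop :=
  MeasurableSet X ∧ (∀ x y, (x, y) ∈ X → (y, x) ∈ X) ∧ X ⊆ G.edgeSet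

/-- The vertex set of the connected component of `x` in the graph with edge set `X`. -/
def compo (X : Set (J × J)) (x : J) : Set J :=
  {y | Relation.ReflTransGen (fun a b => (a, b) ∈ X) x y}

/-- The number of edges of `X` incident with `x`. -/
noncomputable def degX (X : Set (J × J)) (x : J) : ℕ := ({y | (x, y) ∈ X}).ncard

/-- The average degree `d̄` of a graphing. -/
noncomputable def avgDeg (G : Graphing J) : ℝ := ∫ x, (({y | G.E x y}).ncard : ℝ) ∂G.μ

/-- The edge measure `η` of a graphing: `η(X) = (1/d̄) ∫ deg_X dμ`. -/
noncomputable def eta (G : Graphing J) (X : Set (J × J)) : ℝ :=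
  (∫ x, (degX X x : ℝ) ∂G.μ) / G.avgDeg

/-- The normalized rank `ρ(X) = 1 − E_u(1/|V(G^X_u)|)` of a Borel edge set `X`, with the
convention `1/|V| = 0` for infinite components (`Nat.card` of an infinite set is `0`). -/
noncomputable def rho (G : Graphing J) (X : Set (J × J)) : ℝ :=
  1 - ∫ x, (1 : ℝ) / (Nat.card ↥(compo X x)) ∂G.μ

/-- A graphing is hyperfinite if edge sets of arbitrarily small edge measure can be
removed so that only finite connected components remain. -/
def Hyperfinite (G : Graphing J) : Prop :=
  ∀ ε : ℝ, 0 < ε → ∃ X : Set (J × J), G.IsEdgeSubset X ∧ G.eta X < ε ∧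
    ∀ x : J, (compo (G.edgeSet \ X) x).Finite

/-- A set of edges is a forest if for every edge `(a,b)` there is no path from `a` to `b`
avoiding that edge; equivalently, the graph it spans has no cycles. -/
def IsForestSet (X : Set (J × J)) : Prop :=
  ∀ a b : J, (a, b) ∈ X →
    ¬ Relation.ReflTransGen
        (fun u v => (u, v) ∈ X ∧ ¬((u = a ∧ v = b) ∨ (u = b ∧ v = a))) a b

/-- A graphing is a forest (all components are trees) if its edge set is a forest. -/
def IsForest (G : Graphing J) : Prop := IsForestSet G.edgeSet

end Graphing

namespace Graphing

variable {J : Type*} [MeasurableSpace J]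

/-- The points whose section in `F` attains the maximal size `D` form a measurable set: they are
the injective image of the increasing enumerations of maximal sections. -/
theorem measurableSet_ncard_section_eq_max [StandardBorelSpace J] {F : Set (J × J)}
    (hF : MeasurableSet F) {D : ℕ} (hfin : ∀ x, {y | (x, y) ∈ F}.Finite)
    (hD : ∀ x, {y | (x, y) ∈ F}.ncard ≤ D) :
    MeasurableSet {x | {y | (x, y) ∈ F}.ncard = D} := by
  obtain ⟨f, hf⟩ := MeasureTheory.exists_measurableEmbedding_real J
  let _ : LinearOrder J := LinearOrder.lift' f hf.injective
  have hlt : ∀ a b : J, a < b ↔ f a < f b := fun a b => Iff.rfl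
  let T : Set (J × (Fin D → J)) := {p | StrictMono p.2 ∧ ∀ i, (p.1, p.2 i) ∈ F}
  have hT : MeasurableSet T := by
    have : T = (⋂ i, ⋂ j, {p : J × (Fin D → J) | i < j → p.2 i < p.2 j}) ∩
        ⋂ i, {p : J × (Fin D → J) | (p.1, p.2 i) ∈ F} := by
      ext p
      simp only [T, StrictMono, Set.mem_ofPred_eq, Set.mem_inter_iff, Set.mem_iInter]
    rw [this]
    refine MeasurableSet.inter (.iInter fun i => .iInter fun j => ?_) (.iInter fun i => ?_)
    · by_cases hij : i < j
      · simp only [hij, forall_true_left, hlt]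
        exact measurableSet_lt (hf.measurable.comp (by fun_prop)) (hf.measurable.comp (by fun_prop))
      · simp [hij]
    · exact hF.preimage (f := fun p : J × (Fin D → J) => (p.1, p.2 i)) (by fun_prop)
  have hrange : ∀ p ∈ T, Set.range p.2 = {y | (p.1, y) ∈ F} := by
    intro p hp
    refine Set.eq_of_subset_of_ncard_le ?_ ?_ (hfin _)
    · rintro _ ⟨i, rfl⟩
      exact hp.2 i
    · have : (Set.range p.2).ncard = D := by
        rw [← Set.image_univ, Set.ncard_image_of_injective _ hp.1.injective, Set.ncard_univ]
        simp
      rw [this]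
      exact hD _
  have hinj : Set.InjOn Prod.fst T := by
    intro p hp q hq hpq
    refine Prod.ext hpq ((StrictMono.range_inj hp.1 hq.1).1 ?_)
    rw [hrange p hp, hrange q hq, hpq]
  have himg : Prod.fst '' T = {x | {y | (x, y) ∈ F}.ncard = D} := by
    ext x
    constructor
    · rintro ⟨p, hp, rfl⟩
      rw [Set.mem_ofPred_eq, ← hrange p hp, ← Set.image_univ,
        Set.ncard_image_of_injective _ hp.1.injective, Set.ncard_univ]
      simp
    · intro hx
      have hc : (hfin x).toFinset.card = D := by
        rw [← Set.ncard_eq_toFinset_card _ (hfin x)]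
        exact hx
      refine ⟨(x, (hfin x).toFinset.orderEmbOfFin hc), ⟨OrderEmbedding.strictMono _, fun i => ?_⟩, rfl⟩
      exact (hfin x).mem_toFinset.1 (Finset.orderEmbOfFin_mem (hfin x).toFinset hc i)
  rw [← himg]
  exact hT.image_of_measurable_injOn measurable_fst hinj

theorem measurableSet_ncard_section_eq [StandardBorelSpace J] (D : ℕ) :
    ∀ {F : Set (J × J)}, MeasurableSet F → (∀ x, {y | (x, y) ∈ F}.Finite) →
      (∀ x, {y | (x, y) ∈ F}.ncard ≤ D) → ∀ k, MeasurableSet {x | {y | (x, y) ∈ F}.ncard = k} := by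
  induction D with
  | zero =>
    intro F hF hfin hD k
    have : ∀ x, {y | (x, y) ∈ F}.ncard = 0 := fun x => Nat.le_zero.1 (hD x)
    simp [this]
  | succ D ih =>
    intro F hF hfin hD k
    set M := {x | {y | (x, y) ∈ F}.ncard = D + 1} with hMdef
    have hM : MeasurableSet M := measurableSet_ncard_section_eq_max hF hfin hD
    have hF' : MeasurableSet (F \ (Prod.fst ⁻¹' M)) := hF.diff (measurable_fst hM)
    have hsec : ∀ x, x ∉ M → {y | (x, y) ∈ F \ (Prod.fst ⁻¹' M)} = {y | (x, y) ∈ F} := by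
      intro x hx
      ext y
      simp [hx]
    have hsec' : ∀ x, x ∈ M → {y | (x, y) ∈ F \ (Prod.fst ⁻¹' M)} = ∅ := by
      intro x hx
      ext y
      simp [hx]
    have hmeas := ih hF' (fun x => (hfin x).subset fun y hy => hy.1) (fun x => by
      by_cases hx : x ∈ M
      · rw [hsec' x hx]
        simp
      · rw [hsec x hx]
        have h1 := hD x
        have h2 : {y | (x, y) ∈ F}.ncard ≠ D + 1 := hx
        omega) k
    by_cases hk : k = D + 1
    · subst hk
      exact hM
    · have : {x | {y | (x, y) ∈ F}.ncard = k} =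
          {x | {y | (x, y) ∈ F \ (Prod.fst ⁻¹' M)}.ncard = k} \ M := by
        ext x
        by_cases hx : x ∈ M
        · have : {y | (x, y) ∈ F}.ncard = D + 1 := hx
          simp only [Set.mem_ofPred_eq, Set.mem_sdiff, hx, not_true, and_false, iff_false]
          omega
        · rw [Set.mem_sdiff, Set.mem_ofPred_eq, Set.mem_ofPred_eq, hsec x hx]
          simp [hx]
      rw [this]
      exact hmeas.diff hM

/-- The neighbours of `x` in `B`. -/
def nbrs (G : Graphing J) (B : Set J) (x : J) : Set J := {y ∈ B | G.E x y}

theorem finite_nbrs (G : Graphing J) (B : Set J) (x : J) : (G.nbrs B x).Finite :=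
  (G.degFin x).subset fun _ h => h.2

theorem measurableSet_ncard_nbrs_eq [StandardBorelSpace J] (G : Graphing J) {B : Set J}
    (hB : MeasurableSet B) (k : ℕ) : MeasurableSet {x | (G.nbrs B x).ncard = k} := by
  have := measurableSet_ncard_section_eq G.D (F := {p | p.2 ∈ B ∧ G.E p.1 p.2})
    ((measurable_snd hB).inter G.measE) (fun x => G.finite_nbrs B x)
    (fun x => (Set.ncard_le_ncard (fun y hy => hy.2) (G.degFin x)).trans (G.degBound x)) k
  exact this

/-- A partial bijection which, together with its inverse, is measurable and which preserves `μ`. -/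
structure MeasurePreservingOn (μ : Measure J) (e : PartialEquiv J J) : Prop where
  measurable_toFun : Measurable e
  measurable_symm : Measurable e.symm
  measurableSet_source : MeasurableSet e.source
  measurableSet_target : MeasurableSet e.target
  map_restrict : (μ.restrict e.source).map e = μ.restrict e.target

namespace MeasurePreservingOn

variable {μ : Measure J} {e e' : PartialEquiv J J}

theorem map_restrict_inter (he : MeasurePreservingOn μ e) {U : Set J} (hU : MeasurableSet U) :
    (μ.restrict (e.source ∩ e ⁻¹' U)).map e = μ.restrict (e.target ∩ U) := by
  rw [Set.inter_comm, Set.inter_comm e.target,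
    ← Measure.restrict_restrict (he.measurable_toFun hU), ← Measure.restrict_restrict hU,
    ← he.map_restrict, Measure.restrict_map he.measurable_toFun hU]

theorem refl (μ : Measure J) : MeasurePreservingOn μ (PartialEquiv.refl J) where
  measurable_toFun := measurable_id
  measurable_symm := measurable_id
  measurableSet_source := .univ
  measurableSet_target := .univ
  map_restrict := Measure.map_id

theorem restr (he : MeasurePreservingOn μ e) {s : Set J} (hs : MeasurableSet s) :
    MeasurePreservingOn μ (e.restr s) where
  measurable_toFun := he.measurable_toFun
  measurable_symm := he.measurable_symm
  measurableSet_source := he.measurableSet_source.inter hs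
  measurableSet_target := he.measurableSet_target.inter (he.measurable_symm hs)
  map_restrict := by
    have := he.map_restrict_inter (he.measurable_symm hs)
    rwa [e.source_inter_preimage_inv_preimage] at this

theorem trans (he : MeasurePreservingOn μ e) (he' : MeasurePreservingOn μ e') :
    MeasurePreservingOn μ (e.trans e') where
  measurable_toFun := he'.measurable_toFun.comp he.measurable_toFun
  measurable_symm := he.measurable_symm.comp he'.measurable_symm
  measurableSet_source := by
    rw [PartialEquiv.trans_source]
    exact he.measurableSet_source.inter (he.measurable_toFun he'.measurableSet_source)
  measurableSet_target := by
    rw [PartialEquiv.trans_target]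
    exact he'.measurableSet_target.inter (he'.measurable_symm he.measurableSet_target)
  map_restrict := by
    rw [PartialEquiv.trans_source, PartialEquiv.trans_target, PartialEquiv.coe_trans,
      ← Measure.map_map he'.measurable_toFun he.measurable_toFun,
      he.map_restrict_inter he'.measurableSet_source,
      ← he'.map_restrict_inter (he'.measurable_symm he.measurableSet_target),
      e'.source_inter_preimage_inv_preimage, Set.inter_comm]

theorem lintegral_source (he : MeasurePreservingOn μ e) {F : J × J → ENNReal}
    (hF : Measurable F) :
    ∫⁻ x in e.source, F (x, e x) ∂μ = ∫⁻ y in e.target, F (e.symm y, y) ∂μ := by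
  have hs := he.measurable_symm
  rw [← he.map_restrict, lintegral_map (by fun_prop) he.measurable_toFun]
  refine setLIntegral_congr_fun he.measurableSet_source fun x hx => ?_
  simp only [e.left_inv hx]

end MeasurePreservingOn

open Classical in
/-- The unique neighbour of `x` in `B` if there is exactly one, and `x` otherwise. -/
noncomputable def pick (G : Graphing J) (B : Set J) (x : J) : J :=
  if h : ∃ y, G.nbrs B x = {y} then h.choose else x

theorem nbrs_eq_singleton_pick (G : Graphing J) {B : Set J} {x : J}
    (h : (G.nbrs B x).ncard = 1) : G.nbrs B x = {G.pick B x} := by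
  have h' := Set.ncard_eq_one.1 h
  rw [pick, dif_pos h']
  exact h'.choose_spec

theorem pick_mem_nbrs (G : Graphing J) {B : Set J} {x : J}
    (h : (G.nbrs B x).ncard = 1) : G.pick B x ∈ G.nbrs B x := by
  rw [nbrs_eq_singleton_pick G h]
  rfl

theorem eq_pick (G : Graphing J) {B : Set J} {x y : J}
    (h : (G.nbrs B x).ncard = 1) (hy : y ∈ B) (hxy : G.E x y) : G.pick B x = y := by
  have : y ∈ G.nbrs B x := ⟨hy, hxy⟩
  rw [nbrs_eq_singleton_pick G h] at this
  exact this.symm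

theorem measurable_pick [StandardBorelSpace J] (G : Graphing J) {B : Set J}
    (hB : MeasurableSet B) : Measurable (G.pick B) := by
  intro C hC
  have : G.pick B ⁻¹' C =
      ({x | (G.nbrs B x).ncard = 1} ∩ {x | (G.nbrs (B ∩ C) x).ncard = 1}) ∪
        ({x | (G.nbrs B x).ncard = 1}ᶜ ∩ C) := by
    ext x
    by_cases h : (G.nbrs B x).ncard = 1
    · have hBC : G.nbrs (B ∩ C) x = {G.pick B x} ∩ C := by
        rw [← nbrs_eq_singleton_pick G h]
        ext y
        simp only [nbrs, Set.mem_ofPred_eq, Set.mem_inter_iff]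
        tauto
      by_cases hC : G.pick B x ∈ C
      · simp [-Set.ncard_eq_one, h, hBC, hC]
      · simp [-Set.ncard_eq_one, h, hBC, hC]
    · have : G.pick B x = x := by
        rw [pick, dif_neg]
        rwa [← Set.ncard_eq_one]
      simp [-Set.ncard_eq_one, h, this]
  rw [this]
  have h1 := measurableSet_ncard_nbrs_eq G hB 1
  exact (h1.inter (measurableSet_ncard_nbrs_eq G (hB.inter hC) 1)).union (h1.compl.inter hC)

theorem pick_pick (G : Graphing J) {B C : Set J} {x : J} (hx : x ∈ C)
    (h : (G.nbrs B x).ncard = 1) (h' : (G.nbrs C (G.pick B x)).ncard = 1) :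
    G.pick C (G.pick B x) = x :=
  eq_pick G h' hx (G.symm _ _ (pick_mem_nbrs G h).2)

/-- The partial bijection from `C` to `B` along edges `xy` such that `y` is the only neighbour
of `x` in `B` and `x` is the only neighbour of `y` in `C`. -/
noncomputable def edgeEquiv (G : Graphing J) (B C : Set J) : PartialEquiv J J where
  toFun := G.pick B
  invFun := G.pick C
  source := {x ∈ C | (G.nbrs B x).ncard = 1 ∧ (G.nbrs C (G.pick B x)).ncard = 1}
  target := {y ∈ B | (G.nbrs C y).ncard = 1 ∧ (G.nbrs B (G.pick C y)).ncard = 1}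
  map_source' := by
    rintro x ⟨hx, h, h'⟩
    exact ⟨(pick_mem_nbrs G h).1, h', by rwa [pick_pick G hx h h']⟩
  map_target' := by
    rintro x ⟨hx, h, h'⟩
    exact ⟨(pick_mem_nbrs G h).1, h', by rwa [pick_pick G hx h h']⟩
  left_inv' := by
    rintro x ⟨hx, h, h'⟩
    exact pick_pick G hx h h'
  right_inv' := by
    rintro x ⟨hx, h, h'⟩
    exact pick_pick G hx h h'

theorem edge_of_mem_source (G : Graphing J) {B C : Set J} {x : J}
    (hx : x ∈ (G.edgeEquiv B C).source) : G.E x (G.edgeEquiv B C x) :=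
  (pick_mem_nbrs G hx.2.1).2

theorem measurePreservingOn_edgeEquiv [StandardBorelSpace J] (G : Graphing J) {B C : Set J}
    (hB : MeasurableSet B) (hC : MeasurableSet C) :
    MeasurePreservingOn G.μ (G.edgeEquiv B C) := by
  have := G.prob
  have hs : MeasurableSet (G.edgeEquiv B C).source :=
    hC.inter ((measurableSet_ncard_nbrs_eq G hB 1).inter
      (measurable_pick G hB (measurableSet_ncard_nbrs_eq G hC 1)))
  have ht : MeasurableSet (G.edgeEquiv B C).target :=
    hB.inter ((measurableSet_ncard_nbrs_eq G hC 1).inter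
      (measurable_pick G hC (measurableSet_ncard_nbrs_eq G hB 1)))
  refine ⟨measurable_pick G hB, measurable_pick G hC, hs, ht, ?_⟩
  ext U hU
  have hpre : MeasurableSet (G.edgeEquiv B C ⁻¹' U) := measurable_pick G hB hU
  have hmeas : Measurable (G.edgeEquiv B C) := measurable_pick G hB
  rw [Measure.map_apply hmeas hU, Measure.restrict_apply hpre,
    Measure.restrict_apply hU]
  have h1 : ∀ x ∈ G.edgeEquiv B C ⁻¹' U ∩ (G.edgeEquiv B C).source,
      (({y ∈ U ∩ (G.edgeEquiv B C).target | G.E x y}).ncard : ℝ) = 1 := by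
    rintro x ⟨hxU, hx⟩
    have : {y ∈ U ∩ (G.edgeEquiv B C).target | G.E x y} = {G.edgeEquiv B C x} := by
      ext y
      constructor
      · rintro ⟨⟨-, hy⟩, hxy⟩
        exact (eq_pick G hx.2.1 hy.1 hxy).symm
      · rintro rfl
        exact ⟨⟨hxU, (G.edgeEquiv B C).map_source hx⟩, edge_of_mem_source G hx⟩
    rw [this]
    simp
  have h2 : ∀ y ∈ U ∩ (G.edgeEquiv B C).target,
      (({x ∈ G.edgeEquiv B C ⁻¹' U ∩ (G.edgeEquiv B C).source | G.E y x}).ncard : ℝ) = 1 := by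
    rintro y ⟨hyU, hy⟩
    have : {x ∈ G.edgeEquiv B C ⁻¹' U ∩ (G.edgeEquiv B C).source | G.E y x} =
        {(G.edgeEquiv B C).symm y} := by
      ext x
      constructor
      · rintro ⟨⟨-, hx⟩, hxy⟩
        exact (eq_pick G hy.2.1 hx.1 hxy).symm
      · rintro rfl
        refine ⟨⟨?_, (G.edgeEquiv B C).map_target hy⟩, (pick_mem_nbrs G hy.2.1).2⟩
        rwa [Set.mem_preimage, (G.edgeEquiv B C).right_inv hy]
    rw [this]
    simp
  have h := G.mp _ _ (hpre.inter hs) (hU.inter ht)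
  rw [setIntegral_congr_fun (hpre.inter hs) h1, setIntegral_congr_fun (hU.inter ht) h2] at h
  simp only [setIntegral_const, smul_eq_mul, mul_one] at h
  exact (measureReal_eq_measureReal_iff).1 h

/-- Finitely many points of a standard Borel space are isolated from each other by a countable
family of measurable sets. -/
theorem exists_isolating_family [StandardBorelSpace J] :
    ∃ b : ℚ × ℚ → Set J, (∀ q, MeasurableSet (b q)) ∧
      ∀ (s : Set J), s.Finite → ∀ y ∈ s, ∃ q, b q ∩ s = {y} := by
  obtain ⟨f, hf⟩ := MeasureTheory.exists_measurableEmbedding_real J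
  refine ⟨fun q => f ⁻¹' Set.Ioo (q.1 : ℝ) q.2, fun q => hf.measurable measurableSet_Ioo, ?_⟩
  intro s hs y hy
  have hopen : IsOpen (f '' (s \ {y}))ᶜ := (hs.sdiff.image f).isClosed.isOpen_compl
  have hmem : f y ∈ (f '' (s \ {y}))ᶜ := by
    rintro ⟨z, hz, hzy⟩
    exact hz.2 (hf.injective hzy)
  obtain ⟨v, hv, hyv, hvs⟩ := Real.isTopologicalBasis_Ioo_rat.exists_subset_of_mem_open hmem hopen
  simp only [Set.mem_iUnion, Set.mem_singleton_iff] at hv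
  obtain ⟨p, q, -, rfl⟩ := hv
  refine ⟨(p, q), Set.Subset.antisymm ?_ ?_⟩
  · rintro z ⟨hz, hzs⟩
    by_contra hne
    exact hvs hz ⟨z, ⟨hzs, hne⟩, rfl⟩
  · rintro _ rfl
    exact ⟨hyv, hy⟩

theorem exists_edge_generators [StandardBorelSpace J] (G : Graphing J) :
    ∃ e : (ℚ × ℚ) × (ℚ × ℚ) → PartialEquiv J J, (∀ i, MeasurePreservingOn G.μ (e i)) ∧
      ∀ x y, G.E x y ↔ ∃ i, x ∈ (e i).source ∧ e i x = y := by
  obtain ⟨b, hb, hsep⟩ := exists_isolating_family (J := J)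
  refine ⟨fun i => G.edgeEquiv (b i.1) (b i.2),
    fun i => measurePreservingOn_edgeEquiv G (hb _) (hb _), fun x y => ⟨fun h => ?_, ?_⟩⟩
  · have key : ∀ x y, G.E x y → ∃ q, y ∈ b q ∧ (G.nbrs (b q) x).ncard = 1 := by
      intro x y h
      obtain ⟨q, hq⟩ := hsep _ (G.degFin x) y h
      have hy : y ∈ b q ∩ {y | G.E x y} := by
        rw [hq]
        rfl
      exact ⟨q, hy.1, Set.ncard_eq_one.2 ⟨y, hq⟩⟩
    obtain ⟨q, hyq, hq⟩ := key x y h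
    obtain ⟨r, hxr, hr⟩ := key y x (G.symm _ _ h)
    have hpick := eq_pick G hq hyq h
    exact ⟨(q, r), ⟨hxr, hq, by rwa [hpick]⟩, hpick⟩
  · rintro ⟨i, hx, rfl⟩
    exact edge_of_mem_source G hx

/-- The equivalence relation of the connected components is a countable disjoint union of graphs
of measure-preserving partial bijections. -/
theorem exists_component_enumeration [StandardBorelSpace J] (G : Graphing J) :
    ∃ e : ℕ → PartialEquiv J J, (∀ n, MeasurePreservingOn G.μ (e n)) ∧
      (∀ x y, y ∈ compo G.edgeSet x ↔ ∃ n, x ∈ (e n).source ∧ e n x = y) ∧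
      ∀ x m n, x ∈ (e m).source → x ∈ (e n).source → e m x = e n x → m = n := by
  obtain ⟨g, hg, hE⟩ := exists_edge_generators G
  let w : List ((ℚ × ℚ) × (ℚ × ℚ)) → PartialEquiv J J :=
    fun l => l.foldr (fun i e => e.trans (g i)) (PartialEquiv.refl J)
  have hw : ∀ l, MeasurePreservingOn G.μ (w l) := by
    intro l
    induction l with
    | nil => exact .refl _
    | cons i l ih => exact ih.trans (hg i)
  have hcov : ∀ x y, y ∈ compo G.edgeSet x ↔ ∃ l, x ∈ (w l).source ∧ w l x = y := by
    intro x y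
    constructor
    · intro h
      induction h with
      | refl => exact ⟨[], Set.mem_univ _, rfl⟩
      | tail _ hbc ih =>
        obtain ⟨l, hl, rfl⟩ := ih
        obtain ⟨i, hi, rfl⟩ := (hE (w l x) _).1 hbc
        refine ⟨i :: l, ?_, rfl⟩
        change x ∈ ((w l).trans (g i)).source
        rw [PartialEquiv.trans_source]
        exact ⟨hl, hi⟩
    · rintro ⟨l, hl, rfl⟩
      induction l with
      | nil => exact Relation.ReflTransGen.refl
      | cons i l ih =>
        change x ∈ ((w l).trans (g i)).source at hl
        rw [PartialEquiv.trans_source] at hl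
        exact (ih hl.1).tail ((hE _ _).2 ⟨i, hl.2, rfl⟩)
  obtain ⟨enum, henum⟩ := exists_surjective_nat (List ((ℚ × ℚ) × (ℚ × ℚ)))
  let s : ℕ → Set J := fun n => ⋂ m, ⋂ _ : m < n,
    ((w (enum m)).source ∩ {x | w (enum m) x = w (enum n) x})ᶜ
  have hs : ∀ n, MeasurableSet (s n) := fun n => .iInter fun m => .iInter fun _ =>
    ((hw _).measurableSet_source.inter
      (measurableSet_eq_fun (hw _).measurable_toFun (hw _).measurable_toFun)).compl
  have huniq : ∀ x m n, m < n → x ∈ (w (enum m)).source → x ∈ s n →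
      w (enum m) x ≠ w (enum n) x := by
    intro x m n hmn hm hn heq
    exact (Set.mem_iInter₂.1 hn m hmn) ⟨hm, heq⟩
  refine ⟨fun n => (w (enum n)).restr (s n), fun n => (hw _).restr (hs n), fun x y => ?_, ?_⟩
  · rw [hcov]
    constructor
    · rintro ⟨l, hl, rfl⟩
      obtain ⟨k, rfl⟩ := henum l
      classical
      have hex : ∃ n, x ∈ (w (enum n)).source ∧ w (enum n) x = w (enum k) x := ⟨k, hl, rfl⟩
      refine ⟨Nat.find hex, ⟨(Nat.find_spec hex).1, ?_⟩, (Nat.find_spec hex).2⟩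
      simp only [s, Set.mem_iInter]
      rintro m hm ⟨h1, h2⟩
      exact Nat.find_min hex hm ⟨h1, h2.trans (Nat.find_spec hex).2⟩
    · rintro ⟨n, hn, rfl⟩
      exact ⟨enum n, hn.1, rfl⟩
  · intro x m n hm hn heq
    rcases lt_trichotomy m n with h | h | h
    · exact absurd heq (huniq x m n h hm.1 hn.2)
    · exact h
    · exact absurd heq.symm (huniq x n m h hn.1 hm.2)

theorem tsum_indicator_const_encard {α : Type*} (s : Set α) (c : ENNReal) :
    ∑' y, s.indicator (fun _ => c) y = (s.encard : ENNReal) * c := by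
  rw [← tsum_subtype, ENNReal.tsum_set_const]

theorem tsum_eq_tsum_indicator {α : Type*} {e : ℕ → PartialEquiv α α} {x : α} {f : α → ENNReal}
    (hcov : ∀ y, f y ≠ 0 → ∃ n, x ∈ (e n).source ∧ e n x = y)
    (hinj : ∀ m n, x ∈ (e m).source → x ∈ (e n).source → e m x = e n x → m = n) :
    ∑' y, f y = ∑' n, (e n).source.indicator (fun x => f (e n x)) x := by
  let g : {n | x ∈ (e n).source} → α := fun n => e n x
  have hg : Function.Injective g := fun m n h => Subtype.ext (hinj _ _ m.2 n.2 h)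
  rw [← hg.tsum_eq (f := f) fun y hy => by
    obtain ⟨n, hn, rfl⟩ := hcov y hy
    exact ⟨⟨n, hn⟩, rfl⟩]
  rw [tsum_subtype {n | x ∈ (e n).source} (fun n => f (e n x))]
  rfl

theorem compo_symm {α : Type*} {X : Set (α × α)} (hX : ∀ x y, (x, y) ∈ X → (y, x) ∈ X) {x y : α}
    (h : y ∈ compo X x) : x ∈ compo X y := by
  induction h with
  | refl => exact Relation.ReflTransGen.refl
  | tail _ hbc ih => exact Relation.ReflTransGen.head (hX _ _ hbc) ih

theorem self_mem_compo {α : Type*} (X : Set (α × α)) (x : α) : x ∈ compo X x := Relation.ReflTransGen.refl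

theorem compo_eq {α : Type*} {X : Set (α × α)} (hX : ∀ x y, (x, y) ∈ X → (y, x) ∈ X) {x y : α}
    (h : y ∈ compo X x) : compo X y = compo X x :=
  Set.Subset.antisymm (fun _ hz => Relation.ReflTransGen.trans h hz)
    fun _ hz => Relation.ReflTransGen.trans (compo_symm hX h) hz

theorem compo_mono {α : Type*} {X Y : Set (α × α)} (h : X ⊆ Y) (x : α) : compo X x ⊆ compo Y x :=
  fun _ hy => Relation.ReflTransGen.mono (fun _ _ hab => h hab) _ _ hy

/-- The relation of lying in the same component. -/
def rel {α : Type*} (X : Set (α × α)) : Set (α × α) := {p | p.2 ∈ compo X p.1}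

/-- The saturation of `A` under the component relation of `X`. -/
def sat {α : Type*} (X : Set (α × α)) (A : Set α) : Set α := {x | ∃ y ∈ compo X x, y ∈ A}

theorem inv_encard_compo_le_one {α : Type*} (X : Set (α × α)) (x : α) :
    ((compo X x).encard : ENNReal)⁻¹ ≤ 1 := by
  rw [ENNReal.inv_le_one, ← ENat.toENNReal_one, ENat.toENNReal_le, Set.one_le_encard_iff_nonempty]
  exact ⟨x, self_mem_compo X x⟩

theorem lintegral_inv_encard_ne_top (G : Graphing J) (X : Set (J × J)) :
    ∫⁻ u, ((compo X u).encard : ENNReal)⁻¹ ∂G.μ ≠ ⊤ := by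
  have := G.prob
  refine ne_top_of_le_ne_top ENNReal.one_ne_top
    ((lintegral_mono fun u => inv_encard_compo_le_one X u).trans ?_)
  simp

namespace IsEdgeSubset

variable {G : Graphing J} {X Y : Set (J × J)}

theorem union (hX : G.IsEdgeSubset X) (hY : G.IsEdgeSubset Y) : G.IsEdgeSubset (X ∪ Y) :=
  ⟨hX.1.union hY.1, fun x y h => h.imp (hX.2.1 x y) (hY.2.1 x y), Set.union_subset hX.2.2 hY.2.2⟩

theorem inter (hX : G.IsEdgeSubset X) (hY : G.IsEdgeSubset Y) : G.IsEdgeSubset (X ∩ Y) :=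
  ⟨hX.1.inter hY.1, fun x y h => ⟨hX.2.1 x y h.1, hY.2.1 x y h.2⟩, fun _ h => hX.2.2 h.1⟩

theorem rel_subset (hX : G.IsEdgeSubset X) : rel X ⊆ rel G.edgeSet :=
  fun p hp => compo_mono hX.2.2 p.1 hp

theorem subset_rel (hX : G.IsEdgeSubset X) : X ⊆ rel G.edgeSet :=
  fun _ hp => Relation.ReflTransGen.single (hX.2.2 hp)

theorem encard_compo_inter_le_one {A : Set J}
    (h : ∀ a ∈ A, ∀ b ∈ A, b ∈ compo X a → a = b) (hX : G.IsEdgeSubset X) (v : J) :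
    (compo X v ∩ A).encard ≤ 1 :=
  Set.encard_le_one_iff.2 fun _ _ ha hb =>
    h _ ha.2 _ hb.2 (Relation.ReflTransGen.trans (compo_symm hX.2.1 ha.1) hb.1)

end IsEdgeSubset

variable [StandardBorelSpace J] (G : Graphing J)

theorem measurable_tsum_section {F : J × J → ENNReal} (hF : Measurable F)
    (hsupp : ∀ p, F p ≠ 0 → p ∈ rel G.edgeSet) : Measurable fun x => ∑' y, F (x, y) := by
  obtain ⟨e, he, hcov, hinj⟩ := exists_component_enumeration G
  have : (fun x => ∑' y, F (x, y)) =
      fun x => ∑' n, (e n).source.indicator (fun x => F (x, e n x)) x := by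
    ext x
    refine (tsum_eq_tsum_indicator (fun y hy => (hcov x y).1 (hsupp (x, y) hy)) (hinj x)).trans ?_
    rfl
  rw [this]
  refine Measurable.tsum fun n => Measurable.indicator ?_ (he n).measurableSet_source
  have := (he n).measurable_toFun
  fun_prop

/-- The mass transport principle. -/
theorem mass_transport {F : J × J → ENNReal} (hF : Measurable F)
    (hsupp : ∀ p, F p ≠ 0 → p ∈ rel G.edgeSet) :
    ∫⁻ x, ∑' y, F (x, y) ∂G.μ = ∫⁻ y, ∑' x, F (x, y) ∂G.μ := by
  obtain ⟨e, he, hcov, hinj⟩ := exists_component_enumeration G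
  have h1 : ∀ x, ∑' y, F (x, y) =
      ∑' n, (e n).source.indicator (fun x => F (x, e n x)) x := fun x =>
    (tsum_eq_tsum_indicator (fun y hy => (hcov x y).1 (hsupp (x, y) hy)) (hinj x)).trans rfl
  have h2 : ∀ y, ∑' x, F (x, y) =
      ∑' n, (e n).target.indicator (fun y => F ((e n).symm y, y)) y := fun y => by
    refine (tsum_eq_tsum_indicator (e := fun n => (e n).symm) (x := y) (f := fun x => F (x, y))
      (fun x hx => ?_) fun m n hm hn hmn => ?_).trans rfl
    · obtain ⟨n, hn, rfl⟩ := (hcov x y).1 (hsupp (x, y) hx)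
      exact ⟨n, (e n).map_source hn, (e n).left_inv hn⟩
    · refine hinj ((e m).symm y) m n ((e m).map_target hm) ?_ ?_
      · rw [hmn]
        exact (e n).map_target hn
      · rw [(e m).right_inv hm, hmn, (e n).right_inv hn]
  have m1 : ∀ n, Measurable fun x => F (x, e n x) := fun n => by
    have := (he n).measurable_toFun
    fun_prop
  have m2 : ∀ n, Measurable fun y => F ((e n).symm y, y) := fun n => by
    have := (he n).measurable_symm
    fun_prop
  simp only [h1, h2]
  rw [lintegral_tsum fun n => ((m1 n).indicator (he n).measurableSet_source).aemeasurable,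
    lintegral_tsum fun n => ((m2 n).indicator (he n).measurableSet_target).aemeasurable]
  refine tsum_congr fun n => ?_
  rw [lintegral_indicator (he n).measurableSet_source,
    lintegral_indicator (he n).measurableSet_target]
  exact (he n).lintegral_source hF

theorem measurable_encard_section {T : Set (J × J)} (hT : MeasurableSet T)
    (hTE : T ⊆ rel G.edgeSet) : Measurable fun x => ({y | (x, y) ∈ T}.encard : ENNReal) := by
  have h := measurable_tsum_section G (F := T.indicator fun _ => 1)
    (measurable_const.indicator hT) fun p hp => hTE (Set.mem_of_indicator_ne_zero hp)
  convert h using 2 with x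
  exact ((tsum_indicator_const_encard {y | (x, y) ∈ T} 1).trans (mul_one _)).symm

theorem transport_encard {T : Set (J × J)} (hT : MeasurableSet T)
    (hTE : T ⊆ rel G.edgeSet) {a : J → ENNReal} (ha : Measurable a)
    (haT : ∀ u v, (u, v) ∈ T → a u = a v) :
    ∫⁻ u, ({v | (u, v) ∈ T}.encard : ENNReal) * a u ∂G.μ =
      ∫⁻ v, ({u | (u, v) ∈ T}.encard : ENNReal) * a v ∂G.μ := by
  have h := mass_transport G (F := T.indicator fun p => a p.1)
    ((ha.comp measurable_fst).indicator hT) fun p hp => hTE (Set.mem_of_indicator_ne_zero hp)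
  convert h using 2
  · ext u
    rw [← tsum_indicator_const_encard]
    rfl
  · ext v
    rw [← tsum_indicator_const_encard]
    refine tsum_congr fun u => ?_
    by_cases huv : (u, v) ∈ T
    · simp [huv, haT u v huv]
    · simp [huv]

theorem measurableSet_comp {S T : Set (J × J)} (hS : MeasurableSet S) (hSE : S ⊆ rel G.edgeSet)
    (hT : MeasurableSet T) : MeasurableSet {p : J × J | ∃ y, (p.1, y) ∈ S ∧ (y, p.2) ∈ T} := by
  obtain ⟨e, he, hcov, -⟩ := exists_component_enumeration G
  have : {p : J × J | ∃ y, (p.1, y) ∈ S ∧ (y, p.2) ∈ T} = ⋃ n, {p : J × J |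
      p.1 ∈ (e n).source ∧ (p.1, e n p.1) ∈ S ∧ (e n p.1, p.2) ∈ T} := by
    ext p
    simp only [Set.mem_ofPred_eq, Set.mem_iUnion]
    constructor
    · rintro ⟨y, h1, h2⟩
      obtain ⟨n, hn, rfl⟩ := (hcov p.1 y).1 (hSE h1)
      exact ⟨n, hn, h1, h2⟩
    · rintro ⟨n, hn, h1, h2⟩
      exact ⟨_, h1, h2⟩
  rw [this]
  refine .iUnion fun n => ?_
  have hm := (he n).measurable_toFun
  refine (measurable_fst (he n).measurableSet_source).inter (.inter ?_ ?_)
  · exact hS.preimage (f := fun p : J × J => (p.1, e n p.1)) (by fun_prop)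
  · exact hT.preimage (f := fun p : J × J => (e n p.1, p.2)) (by fun_prop)

theorem measurableSet_exists {S : Set (J × J)} (hS : MeasurableSet S) (hSE : S ⊆ rel G.edgeSet)
    {A : Set J} (hA : MeasurableSet A) : MeasurableSet {x | ∃ y, (x, y) ∈ S ∧ y ∈ A} :=
  (measurableSet_comp G hS hSE (measurable_fst hA)).preimage
    (f := fun x => (x, x)) (by fun_prop)

namespace IsEdgeSubset

variable {G} {X : Set (J × J)}

theorem measurableSet_rel (hX : G.IsEdgeSubset X) : MeasurableSet (rel X) := by
  let R : ℕ → Set (J × J) := fun n => n.rec {p | p.1 = p.2}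
    fun _ S => {p | ∃ y, (p.1, y) ∈ S ∧ (y, p.2) ∈ X}
  have hsub : ∀ n, R n ⊆ rel X := by
    intro n
    induction n with
    | zero =>
      intro p hp
      have hp : p.1 = p.2 := hp
      rw [rel, Set.mem_ofPred_eq, hp]
      exact self_mem_compo X _
    | succ n ih =>
      rintro p ⟨y, h1, h2⟩
      exact (ih h1 : Relation.ReflTransGen _ _ _).tail h2
  have hR : ∀ n, MeasurableSet (R n) := by
    intro n
    induction n with
    | zero => exact measurableSet_eq_fun measurable_fst measurable_snd
    | succ n ih => exact measurableSet_comp G ih ((hsub n).trans hX.rel_subset) hX.1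
  have : rel X = ⋃ n, R n := by
    refine Set.Subset.antisymm ?_ (Set.iUnion_subset hsub)
    rintro ⟨x, y⟩ h
    change Relation.ReflTransGen _ x y at h
    induction h with
    | refl => exact Set.mem_iUnion.2 ⟨0, rfl⟩
    | tail _ hbc ih =>
      obtain ⟨n, hn⟩ := Set.mem_iUnion.1 ih
      exact Set.mem_iUnion.2 ⟨n + 1, _, hn, hbc⟩
  rw [this]
  exact .iUnion hR

theorem measurableSet_sat (hX : G.IsEdgeSubset X) {A : Set J} (hA : MeasurableSet A) :
    MeasurableSet (sat X A) :=
  measurableSet_exists G hX.measurableSet_rel hX.rel_subset hA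

theorem measurable_encard_compo_inter (hX : G.IsEdgeSubset X) {A : Set J} (hA : MeasurableSet A) :
    Measurable fun x => ((compo X x ∩ A).encard : ENNReal) :=
  measurable_encard_section G (T := rel X ∩ Prod.snd ⁻¹' A)
    (hX.measurableSet_rel.inter (measurable_snd hA)) (Set.inter_subset_left.trans hX.rel_subset)

theorem measurable_encard_compo (hX : G.IsEdgeSubset X) :
    Measurable fun x => ((compo X x).encard : ENNReal) :=
  measurable_encard_section G hX.measurableSet_rel hX.rel_subset

/-- Every finite component meeting `S` distributes its unit mass evenly over its points in `S`. -/
theorem lintegral_sat_inv_le (hX : G.IsEdgeSubset X) {S : Set J} (hS : MeasurableSet S)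
    {ψ : J → ENNReal} (hψ : ∀ v ∈ S, ((compo X v ∩ S).encard : ENNReal)⁻¹ ≤ ψ v) :
    ∫⁻ u in sat X S, ((compo X u).encard : ENNReal)⁻¹ ∂G.μ ≤ ∫⁻ v in S, ψ v ∂G.μ := by
  have h := transport_encard G (T := rel X ∩ Prod.snd ⁻¹' S)
    (hX.measurableSet_rel.inter (measurable_snd hS)) (Set.inter_subset_left.trans hX.rel_subset)
    (hX.measurable_encard_compo.inv.mul (hX.measurable_encard_compo_inter hS).inv)
    (fun u v huv => by simp only [Pi.mul_apply, Pi.inv_apply, compo_eq hX.2.1 huv.1])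
  rw [← lintegral_indicator (hX.measurableSet_sat hS), ← lintegral_indicator hS]
  refine le_trans (lintegral_mono fun u => ?_) (h.trans_le (lintegral_mono fun v => ?_))
  · refine Set.indicator_apply_le' (fun hu => ?_) fun _ => zero_le
    change _ ≤ ((compo X u ∩ S).encard : ENNReal) *
      (((compo X u).encard : ENNReal)⁻¹ * ((compo X u ∩ S).encard : ENNReal)⁻¹)
    by_cases htop : (compo X u).encard = ⊤
    · simp [htop]
    · have h0 : ((compo X u ∩ S).encard : ENNReal) ≠ 0 := by
        obtain ⟨y, hy, hyS⟩ := hu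
        have hne : (compo X u ∩ S).Nonempty := ⟨y, hy, hyS⟩
        simpa using hne.ne_empty
      have h1 : ((compo X u ∩ S).encard : ENNReal) ≠ ⊤ := by
        simpa using (Set.encard_ne_top_iff.1 htop).inter_of_left S
      rw [mul_comm, mul_assoc, ENNReal.inv_mul_cancel h0 h1, mul_one]
  · by_cases hv : v ∈ S
    · have : {u | (u, v) ∈ rel X ∩ Prod.snd ⁻¹' S} = compo X v := by
        ext u
        exact ⟨fun h => compo_symm hX.2.1 h.1, fun h => ⟨compo_symm hX.2.1 h, hv⟩⟩
      rw [this, Set.indicator_of_mem hv]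
      simp only [Pi.mul_apply, Pi.inv_apply]
      rw [← mul_assoc]
      exact (mul_le_of_le_one_left zero_le (ENNReal.mul_inv_le_one _)).trans (hψ v hv)
    · have : {u | (u, v) ∈ rel X ∩ Prod.snd ⁻¹' S} = ∅ := by
        ext u
        simp [hv]
      rw [this]
      simp

theorem lintegral_encard_mul_indicator (hX : G.IsEdgeSubset X) {A : Set J} (hA : MeasurableSet A)
    {a : J → ENNReal} (ha : Measurable a) (haX : ∀ u, ∀ v ∈ compo X u, a u = a v) :
    ∫⁻ u in A, ((compo X u).encard : ENNReal) * a u ∂G.μ =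
      ∫⁻ v, ((compo X v ∩ A).encard : ENNReal) * a v ∂G.μ := by
  have h := transport_encard G (T := rel X ∩ Prod.fst ⁻¹' A)
    (hX.measurableSet_rel.inter (measurable_fst hA)) (Set.inter_subset_left.trans hX.rel_subset)
    ha (fun u v huv => haX u v huv.1)
  rw [← lintegral_indicator hA]
  convert h using 2
  · ext u
    by_cases hu : u ∈ A
    · simp [hu, rel]
    · simp [hu]
  · ext v
    congr 3
    ext u
    exact ⟨fun h => ⟨compo_symm hX.2.1 h.1, h.2⟩, fun h => ⟨compo_symm hX.2.1 h.1, h.2⟩⟩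

theorem measure_le_lintegral_sat (hX : G.IsEdgeSubset X) {A : Set J} (hA : MeasurableSet A)
    (hfin : ∀ a ∈ A, (compo X a).Finite) (huniq : ∀ a ∈ A, ∀ b ∈ A, b ∈ compo X a → a = b) :
    G.μ A ≤ ∫⁻ v in sat X A, ((compo X v).encard : ENNReal)⁻¹ ∂G.μ := by
  have h := hX.lintegral_encard_mul_indicator hA hX.measurable_encard_compo.inv
    (fun u v hv => by simp only [Pi.inv_apply, compo_eq hX.2.1 hv])
  rw [setLIntegral_congr_fun (g := fun _ => 1) hA fun u hu => ?_] at h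
  · rw [setLIntegral_one] at h
    rw [h, ← lintegral_indicator (hX.measurableSet_sat hA)]
    refine lintegral_mono fun v => ?_
    by_cases hv : v ∈ sat X A
    · rw [Set.indicator_of_mem hv]
      refine mul_le_of_le_one_left zero_le ?_
      exact (ENat.toENNReal_le.2 (encard_compo_inter_le_one huniq hX v)).trans_eq ENat.toENNReal_one
    · have : compo X v ∩ A = ∅ := by
        ext y
        exact ⟨fun hy => hv ⟨y, hy.1, hy.2⟩, fun hy => hy.elim⟩
      simp [this]
  · refine ENNReal.mul_inv_cancel ?_ ?_
    · simpa using Set.Nonempty.ne_empty ⟨u, self_mem_compo X u⟩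
    · simpa using hfin u hu

theorem measure_eq_zero_of_infinite (hX : G.IsEdgeSubset X) {A : Set J} (hA : MeasurableSet A)
    (hinf : ∀ a ∈ A, (compo X a).Infinite) (huniq : ∀ a ∈ A, ∀ b ∈ A, b ∈ compo X a → a = b) :
    G.μ A = 0 := by
  have := G.prob
  have h := hX.lintegral_encard_mul_indicator hA (a := 1) measurable_const fun _ _ _ => rfl
  rw [setLIntegral_congr_fun (g := fun _ => ⊤) hA fun u hu => by simp [hinf u hu]] at h
  have hle : ∫⁻ v, ((compo X v ∩ A).encard : ENNReal) * (1 : J → ENNReal) v ∂G.μ ≤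
      ∫⁻ _, 1 ∂G.μ := by
    refine lintegral_mono fun v => ?_
    simp only [Pi.one_apply, mul_one]
    exact (ENat.toENNReal_le.2 (encard_compo_inter_le_one huniq hX v)).trans_eq ENat.toENNReal_one
  rw [← h, setLIntegral_const, lintegral_one, measure_univ] at hle
  by_contra h0
  rw [ENNReal.top_mul h0] at hle
  exact absurd hle (by simp)

end IsEdgeSubset

theorem exists_bounded_measurable_injective (J : Type*) [MeasurableSpace J]
    [StandardBorelSpace J] :
    ∃ f : J → ℝ, Measurable f ∧ Function.Injective f ∧ ∃ a b, ∀ x, a < f x ∧ f x < b := by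
  obtain ⟨f, hf⟩ := MeasureTheory.exists_measurableEmbedding_real J
  exact ⟨fun x => Real.arctan (f x), Real.measurable_arctan.comp hf.measurable,
    Real.arctan_injective.comp hf.injective, _, _,
    fun x => ⟨Real.neg_pi_div_two_lt_arctan _, Real.arctan_lt_pi_div_two _⟩⟩

namespace IsEdgeSubset

variable {G} {X : Set (J × J)}

theorem measurableSet_infinite (hX : G.IsEdgeSubset X) {T : Set (J × J)} (hT : MeasurableSet T) :
    MeasurableSet {x | {y ∈ compo X x | (x, y) ∈ T}.Infinite} := by
  have h := measurable_encard_section G (T := rel X ∩ T) (hX.measurableSet_rel.inter hT)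
    (Set.inter_subset_left.trans hX.rel_subset) (measurableSet_singleton ⊤)
  convert h using 1
  ext x
  simp only [Set.mem_preimage, Set.mem_singleton_iff, ENat.toENNReal_eq_top,
    Set.encard_eq_top_iff]
  rfl

/-- The infinite components are met by measurable sets of arbitrarily small measure. -/
theorem exists_marker (hX : G.IsEdgeSubset X) {ε : ENNReal} (hε : 0 < ε) :
    ∃ A, MeasurableSet A ∧ G.μ A < ε ∧
      ∀ x, (compo X x).Infinite → ∃ a ∈ compo X x, a ∈ A := by
  have := G.prob
  obtain ⟨f, hf, hinj, a, b, hab⟩ := exists_bounded_measurable_injective J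
  let A : ℕ → Set J := fun n =>
    {x | {y ∈ compo X x | f y < f x + 1 / ((n : ℝ) + 1)}.Infinite} ∩
      {x | {y ∈ compo X x | f y < f x - 1 / ((n : ℝ) + 1)}.Infinite}ᶜ
  have hA : ∀ n, MeasurableSet (A n) := fun n =>
    (hX.measurableSet_infinite (T := {p | f p.2 < f p.1 + 1 / ((n : ℝ) + 1)})
      (measurableSet_lt (by fun_prop) (by fun_prop))).inter
    (hX.measurableSet_infinite (T := {p | f p.2 < f p.1 - 1 / ((n : ℝ) + 1)})
      (measurableSet_lt (by fun_prop) (by fun_prop))).compl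
  have hanti : Antitone A := by
    rintro m n hmn x ⟨h1, h2⟩
    have hle : 1 / ((n : ℝ) + 1) ≤ 1 / ((m : ℝ) + 1) := Nat.one_div_le_one_div hmn
    refine ⟨h1.mono fun y hy => ⟨hy.1, ?_⟩, fun h => h2 (h.mono fun y hy => ⟨hy.1, ?_⟩)⟩
    · linarith [hy.2]
    · linarith [hy.2]
  have hzero : G.μ (⋂ n, A n) = 0 := by
    refine hX.measure_eq_zero_of_infinite (.iInter hA) (fun x hx => ?_) ?_
    · exact (Set.mem_iInter.1 hx 0).1.mono fun y hy => hy.1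
    · have key : ∀ x ∈ ⋂ n, A n, ∀ y ∈ ⋂ n, A n, y ∈ compo X x → ¬ f x < f y := by
        intro x hx y hy hxy hlt
        obtain ⟨n, hn⟩ := exists_nat_one_div_lt (half_pos (sub_pos.2 hlt))
        refine (Set.mem_iInter.1 hy n).2 ?_
        change Set.Infinite _
        rw [compo_eq hX.2.1 hxy]
        refine (Set.mem_iInter.1 hx n).1.mono fun z hz => ⟨hz.1, ?_⟩
        linarith [hz.2]
      intro x hx y hy hxy
      refine hinj (le_antisymm ?_ ?_)
      · exact not_lt.1 (key y hy x hx (compo_symm hX.2.1 hxy))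
      · exact not_lt.1 (key x hx y hy hxy)
  have htend := tendsto_measure_iInter_atTop (μ := G.μ) (fun n => (hA n).nullMeasurableSet) hanti
    ⟨0, measure_ne_top _ _⟩
  rw [hzero] at htend
  obtain ⟨n, hn⟩ := (htend.eventually (gt_mem_nhds hε)).exists
  refine ⟨A n, hA n, hn, fun x hx => ?_⟩
  set c : ℝ := 1 / ((n : ℝ) + 1) with hc
  have hcpos : 0 < c := Nat.one_div_pos_of_nat
  let P : Set ℝ := {t | {y ∈ compo X x | f y < t}.Infinite}
  have hPne : P.Nonempty := ⟨b, hx.mono fun y hy => ⟨hy, (hab y).2⟩⟩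
  have hPbdd : BddBelow P := by
    refine ⟨a, fun t ht => ?_⟩
    obtain ⟨y, -, hy⟩ := Set.Infinite.nonempty ht
    linarith [(hab y).1]
  obtain ⟨t, ht, htlt⟩ := exists_lt_of_csInf_lt hPne (lt_add_of_pos_right (sInf P) (half_pos hcpos))
  have hlow : ∀ s < sInf P, {y ∈ compo X x | f y < s}.Finite := fun s hs =>
    Set.not_infinite.1 fun h => absurd (csInf_le hPbdd h) (not_le.2 hs)
  obtain ⟨y, ⟨hyK, hyt⟩, hy⟩ := (Set.Infinite.sdiff ht
    (hlow (sInf P - c / 2) (by linarith))).nonempty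
  have hyl : sInf P - c / 2 ≤ f y := not_lt.1 fun h => hy ⟨hyK, h⟩
  refine ⟨y, hyK, ?_, ?_⟩
  · change Set.Infinite _
    rw [compo_eq hX.2.1 hyK]
    refine Set.Infinite.mono (fun z hz => ⟨hz.1, ?_⟩) ht
    linarith [hz.2]
  · change ¬ Set.Infinite _
    rw [compo_eq hX.2.1 hyK, Set.not_infinite]
    exact hlow _ (by linarith)

/-- The finite components have a measurable transversal. -/
theorem exists_transversal (hX : G.IsEdgeSubset X) :
    ∃ A, MeasurableSet A ∧ (∀ a ∈ A, (compo X a).Finite) ∧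
      (∀ a ∈ A, ∀ b ∈ A, b ∈ compo X a → a = b) ∧
      ∀ x, (compo X x).Finite → ∃ a ∈ compo X x, a ∈ A := by
  obtain ⟨f, hf, hinj, -⟩ := exists_bounded_measurable_injective J
  have hfin : MeasurableSet {x | (compo X x).Finite} := by
    convert (hX.measurableSet_infinite MeasurableSet.univ).compl using 1
    ext x
    simp [Set.not_infinite]
  have hlt := measurableSet_exists G (S := rel X ∩ {p | f p.2 < f p.1})
    (hX.measurableSet_rel.inter (measurableSet_lt (by fun_prop) (by fun_prop)))
    (Set.inter_subset_left.trans hX.rel_subset) MeasurableSet.univ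
  refine ⟨_, hfin.inter hlt.compl, fun a ha => ha.1, fun a ha b hb hab => ?_, fun x hx => ?_⟩
  · refine hinj (le_antisymm (not_lt.1 fun h => ?_) (not_lt.1 fun h => ?_))
    · exact ha.2 ⟨b, ⟨hab, h⟩, trivial⟩
    · exact hb.2 ⟨a, ⟨compo_symm hX.2.1 hab, h⟩, trivial⟩
  · obtain ⟨a, ha, hmin⟩ := Set.exists_min_image _ f hx ⟨x, self_mem_compo X x⟩
    refine ⟨a, ha, ?_, ?_⟩
    · rwa [Set.mem_ofPred_eq, compo_eq hX.2.1 ha]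
    · rintro ⟨y, ⟨hy, hlt⟩, -⟩
      exact absurd (hmin y (Relation.ReflTransGen.trans ha hy)) (not_le.2 hlt)

/-- A distance to a measurable set meeting every component. -/
theorem exists_distance (hX : G.IsEdgeSubset X) {A : Set J} (hA : MeasurableSet A)
    (hmeet : ∀ x, ∃ a ∈ compo X x, a ∈ A) :
    ∃ d : J → ℕ, Measurable d ∧ (∀ a ∈ A, d a = 0) ∧
      ∀ v ∉ A, ∃ w, (v, w) ∈ X ∧ d w < d v := by
  let B : ℕ → Set J := fun n => n.rec A fun _ S => S ∪ {v | ∃ w, (v, w) ∈ X ∧ w ∈ S}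
  have hB : ∀ n, MeasurableSet (B n) := by
    intro n
    induction n with
    | zero => exact hA
    | succ n ih => exact ih.union (measurableSet_exists G hX.1 hX.subset_rel ih)
  have hne : ∀ v, {n | v ∈ B n}.Nonempty := by
    intro v
    obtain ⟨a, hva, ha⟩ := hmeet v
    refine Relation.ReflTransGen.head_induction_on hva ⟨0, ha⟩ ?_
    rintro x y hxy - ⟨n, hn⟩
    exact ⟨n + 1, Or.inr ⟨y, hxy, hn⟩⟩
  refine ⟨fun v => sInf {n | v ∈ B n}, measurable_of_Iic fun k => ?_, fun a ha => ?_,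
    fun v hv => ?_⟩
  · have : (fun v => sInf {n | v ∈ B n}) ⁻¹' Set.Iic k = ⋃ n, ⋃ _ : n ≤ k, B n := by
      ext v
      simp only [Set.mem_preimage, Set.mem_Iic, Set.mem_iUnion, exists_prop]
      exact ⟨fun h => ⟨_, h, Nat.sInf_mem (hne v)⟩, fun ⟨n, hnk, hn⟩ => (Nat.sInf_le hn).trans hnk⟩
    rw [this]
    exact .iUnion fun n => .iUnion fun _ => hB n
  · exact Nat.le_zero.1 (Nat.sInf_le ha)
  · have hmem : v ∈ B (sInf {n | v ∈ B n}) := Nat.sInf_mem (hne v)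
    rcases hn : sInf {n | v ∈ B n} with _ | m
    · rw [hn] at hmem
      exact absurd hmem hv
    · rw [hn] at hmem
      rcases hmem with hm | ⟨w, hvw, hw⟩
      · have : sInf {n | v ∈ B n} ≤ m := Nat.sInf_le hm
        omega
      · refine ⟨w, hvw, ?_⟩
        change sInf {n | w ∈ B n} < sInf {n | v ∈ B n}
        rw [hn]
        exact Nat.lt_succ_of_le (Nat.sInf_le hw)

end IsEdgeSubset

/-- The minimum of `d` over the component of `u`. -/
noncomputable def minOn {α : Type*} (X : Set (α × α)) (d : α → ℕ) (u : α) : ℕ :=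
  sInf (d '' compo X u)

theorem minOn_le {α : Type*} {X : Set (α × α)} (d : α → ℕ) {u v : α} (h : v ∈ compo X u) :
    minOn X d u ≤ d v :=
  Nat.sInf_le ⟨v, h, rfl⟩

theorem exists_eq_minOn {α : Type*} (X : Set (α × α)) (d : α → ℕ) (u : α) :
    ∃ v ∈ compo X u, d v = minOn X d u :=
  Nat.sInf_mem (s := d '' compo X u) ⟨_, u, self_mem_compo X u, rfl⟩

/-- If `d` is a distance to `A` along `X ∪ Y`, every component of `X` that is disjoint from `A`
contains a point whose component in `Y` is closer to `A`. -/
theorem mem_sat_or_mem_sat {α : Type*} {X Y : Set (α × α)} {A : Set α} {d : α → ℕ}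
    (hdec : ∀ v ∉ A, ∃ w, (v, w) ∈ X ∪ Y ∧ d w < d v) (u : α) :
    u ∈ sat X {v | minOn Y d v < minOn X d u} ∪ sat X A := by
  obtain ⟨v, hv, hdv⟩ := exists_eq_minOn X d u
  by_cases hvA : v ∈ A
  · exact Or.inr ⟨v, hv, hvA⟩
  · obtain ⟨w, hw | hw, hlt⟩ := hdec v hvA
    · have := minOn_le d (Relation.ReflTransGen.tail hv hw)
      omega
    · refine Or.inl ⟨v, hv, ?_⟩
      have := minOn_le d (X := Y) (Relation.ReflTransGen.single hw)
      change minOn Y d v < minOn X d u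
      omega

namespace IsEdgeSubset

variable {G} {X Y : Set (J × J)}

theorem measurable_minOn (hX : G.IsEdgeSubset X) {d : J → ℕ} (hd : Measurable d) :
    Measurable (minOn X d) := by
  refine measurable_of_Iic fun k => ?_
  have : minOn X d ⁻¹' Set.Iic k = sat X (d ⁻¹' Set.Iic k) := by
    ext u
    constructor
    · intro h
      obtain ⟨v, hv, hdv⟩ := exists_eq_minOn X d u
      exact ⟨v, hv, hdv.trans_le h⟩
    · rintro ⟨v, hv, hdv⟩
      exact (minOn_le d hv).trans hdv
  rw [this]
  exact hX.measurableSet_sat (hd measurableSet_Iic)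

/-- Up to the components meeting `A`, the finite components of `X` are counted by the finite
components of `Z` that lie in the same component of `Y` as some point closer to `A`. -/
theorem lintegral_inv_encard_le {Z : Set (J × J)} (hX : G.IsEdgeSubset X)
    (hY : G.IsEdgeSubset Y) (hZX : Z ⊆ X) (hZY : Z ⊆ Y) {A : Set J}
    (hA : MeasurableSet A) {d : J → ℕ} (hd : Measurable d)
    (hdec : ∀ v ∉ A, ∃ w, (v, w) ∈ X ∪ Y ∧ d w < d v) :
    ∫⁻ u, ((compo X u).encard : ENNReal)⁻¹ ∂G.μ ≤
      ∫⁻ v in {v | minOn Y d v < minOn X d v}, ((compo Z v).encard : ENNReal)⁻¹ ∂G.μ + G.μ A := by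
  set S : Set J := {v | minOn Y d v < minOn X d v} with hSdef
  have hS : MeasurableSet S := measurableSet_lt (hY.measurable_minOn hd) (hX.measurable_minOn hd)
  have hcover : sat X S ∪ sat X A = Set.univ := by
    refine Set.eq_univ_of_forall fun u => ?_
    refine (mem_sat_or_mem_sat hdec u).imp ?_ id
    rintro ⟨v, hv, hlt⟩
    refine ⟨v, hv, ?_⟩
    have : minOn X d v = minOn X d u := by rw [minOn, minOn, compo_eq hX.2.1 hv]
    rw [hSdef, Set.mem_ofPred_eq, this]
    exact hlt
  rw [← setLIntegral_univ, ← hcover]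
  refine (lintegral_union_le _ _ _).trans (add_le_add ?_ ?_)
  · refine hX.lintegral_sat_inv_le hS fun v hv => ENNReal.inv_le_inv.2 (ENat.toENNReal_le.2 ?_)
    refine Set.encard_le_encard fun w hw => ⟨compo_mono hZX v hw, ?_⟩
    have h1 : minOn X d w = minOn X d v := by
      rw [minOn, minOn, compo_eq hX.2.1 (compo_mono hZX v hw)]
    have h2 : minOn Y d w = minOn Y d v := by
      rw [minOn, minOn, compo_eq hY.2.1 (compo_mono hZY v hw)]
    rw [hSdef, Set.mem_ofPred_eq, h1, h2]
    exact hv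
  · rw [← setLIntegral_one]
    refine hX.lintegral_sat_inv_le hA fun v hv => ?_
    rw [ENNReal.inv_le_one, ← ENat.toENNReal_one, ENat.toENNReal_le,
      Set.one_le_encard_iff_nonempty]
    exact ⟨v, self_mem_compo X v, hv⟩

theorem lintegral_inv_encard_add_le_of_marker (hX : G.IsEdgeSubset X) (hY : G.IsEdgeSubset Y)
    {A B : Set J} (hA : MeasurableSet A) (hB : MeasurableSet B)
    (hfin : ∀ a ∈ A, (compo (X ∪ Y) a).Finite)
    (huniq : ∀ a ∈ A, ∀ b ∈ A, b ∈ compo (X ∪ Y) a → a = b)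
    (hmeet : ∀ x, ∃ a ∈ compo (X ∪ Y) x, a ∈ A ∪ B) :
    ∫⁻ u, ((compo X u).encard : ENNReal)⁻¹ ∂G.μ + ∫⁻ u, ((compo Y u).encard : ENNReal)⁻¹ ∂G.μ ≤
      ∫⁻ u, ((compo (X ∪ Y) u).encard : ENNReal)⁻¹ ∂G.μ +
        ∫⁻ u, ((compo (X ∩ Y) u).encard : ENNReal)⁻¹ ∂G.μ + 2 * G.μ B := by
  have := G.prob
  have hW := hX.union hY
  have hZ := hX.inter hY
  obtain ⟨d, hd, hd0, hdec⟩ := hW.exists_distance (hA.union hB) hmeet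
  have hmX := hX.measurable_minOn hd
  have hmY := hY.measurable_minOn hd
  have h1 := hX.lintegral_inv_encard_le hY (Z := X ∩ Y) Set.inter_subset_left
    Set.inter_subset_right (hA.union hB) hd hdec
  have h2 := hY.lintegral_inv_encard_le hX (Z := X ∩ Y) Set.inter_subset_right
    Set.inter_subset_left (hA.union hB) hd (by rwa [Set.union_comm Y X])
  have h3 : G.μ A ≤ ∫⁻ v in sat (X ∩ Y) A, ((compo (X ∩ Y) v).encard : ENNReal)⁻¹ ∂G.μ :=
    hZ.measure_le_lintegral_sat hA
      (fun a ha => (hfin a ha).subset (compo_mono (fun p hp => Or.inl hp.1) a))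
      fun a ha b hb hab => huniq a ha b hb (compo_mono (fun p hp => Or.inl hp.1) a hab)
  have h4 : G.μ A ≤ ∫⁻ v, ((compo (X ∪ Y) v).encard : ENNReal)⁻¹ ∂G.μ :=
    (hW.measure_le_lintegral_sat hA hfin huniq).trans (setLIntegral_le_lintegral _ _)
  have hSX : MeasurableSet {v | minOn X d v < minOn Y d v} := measurableSet_lt hmX hmY
  have hsat : ∀ v ∈ sat (X ∩ Y) A, minOn X d v = 0 ∧ minOn Y d v = 0 := by
    rintro v ⟨a, hva, ha⟩
    have hda := hd0 a (Or.inl ha)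
    have e1 := minOn_le d (compo_mono Set.inter_subset_left v hva)
    have e2 := minOn_le d (compo_mono Set.inter_subset_right v hva)
    omega
  have hsum : ∫⁻ v in {v | minOn Y d v < minOn X d v},
        ((compo (X ∩ Y) v).encard : ENNReal)⁻¹ ∂G.μ +
      ∫⁻ v in {v | minOn X d v < minOn Y d v}, ((compo (X ∩ Y) v).encard : ENNReal)⁻¹ ∂G.μ +
      ∫⁻ v in sat (X ∩ Y) A, ((compo (X ∩ Y) v).encard : ENNReal)⁻¹ ∂G.μ ≤
        ∫⁻ v, ((compo (X ∩ Y) v).encard : ENNReal)⁻¹ ∂G.μ := by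
    rw [← lintegral_union hSX, ← lintegral_union (hZ.measurableSet_sat hA)]
    · exact setLIntegral_le_lintegral _ _
    · refine Set.disjoint_left.2 fun v hv hv' => ?_
      obtain ⟨e1, e2⟩ := hsat v hv'
      simp [e1, e2] at hv
    · refine Set.disjoint_left.2 fun v hv hv' => ?_
      exact lt_asymm (Set.mem_ofPred_eq ▸ hv) hv'
  have hAB : G.μ (A ∪ B) ≤ G.μ A + G.μ B := measure_union_le _ _
  have hA2 : G.μ A + G.μ A ≠ ⊤ := by simp
  refine (ENNReal.add_le_add_iff_right hA2).1 ?_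
  calc _ ≤ _ := add_le_add (add_le_add h1 h2) (add_le_add h3 h4)
    _ = (∫⁻ v in {v | minOn Y d v < minOn X d v},
        ((compo (X ∩ Y) v).encard : ENNReal)⁻¹ ∂G.μ +
      ∫⁻ v in {v | minOn X d v < minOn Y d v}, ((compo (X ∩ Y) v).encard : ENNReal)⁻¹ ∂G.μ +
      ∫⁻ v in sat (X ∩ Y) A, ((compo (X ∩ Y) v).encard : ENNReal)⁻¹ ∂G.μ) +
        ∫⁻ v, ((compo (X ∪ Y) v).encard : ENNReal)⁻¹ ∂G.μ + 2 * G.μ (A ∪ B) := by ring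
    _ ≤ ∫⁻ v, ((compo (X ∩ Y) v).encard : ENNReal)⁻¹ ∂G.μ +
        ∫⁻ v, ((compo (X ∪ Y) v).encard : ENNReal)⁻¹ ∂G.μ + 2 * (G.μ A + G.μ B) := by gcongr
    _ = _ := by ring

theorem lintegral_inv_encard_add_le (hX : G.IsEdgeSubset X) (hY : G.IsEdgeSubset Y) :
    ∫⁻ u, ((compo X u).encard : ENNReal)⁻¹ ∂G.μ + ∫⁻ u, ((compo Y u).encard : ENNReal)⁻¹ ∂G.μ ≤
      ∫⁻ u, ((compo (X ∪ Y) u).encard : ENNReal)⁻¹ ∂G.μ +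
        ∫⁻ u, ((compo (X ∩ Y) u).encard : ENNReal)⁻¹ ∂G.μ := by
  refine ENNReal.le_of_forall_pos_le_add fun ε hε _ => ?_
  have hW := hX.union hY
  obtain ⟨A, hA, hfin, huniq, hmeetA⟩ := hW.exists_transversal
  obtain ⟨B, hB, hBε, hmeetB⟩ := hW.exists_marker (ε := (ε : ENNReal) / 2) (by simpa using hε.ne')
  refine (hX.lintegral_inv_encard_add_le_of_marker hY hA hB hfin huniq fun x => ?_).trans ?_
  · rcases Set.finite_or_infinite (compo (X ∪ Y) x) with h | h
    · exact (hmeetA x h).imp fun a ha => ⟨ha.1, Or.inl ha.2⟩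
    · exact (hmeetB x h).imp fun a ha => ⟨ha.1, Or.inr ha.2⟩
  · refine add_le_add le_rfl ?_
    calc 2 * G.μ B ≤ 2 * ((ε : ENNReal) / 2) := by gcongr
      _ = ε := ENNReal.mul_div_cancel (by simp) (by simp)

theorem rho_eq (hX : G.IsEdgeSubset X) :
    G.rho X = 1 - (∫⁻ u, ((compo X u).encard : ENNReal)⁻¹ ∂G.μ).toReal := by
  rw [rho, ← integral_toReal (f := fun u => ((compo X u).encard : ENNReal)⁻¹)
    hX.measurable_encard_compo.inv.aemeasurable (.of_forall fun u => (inv_encard_compo_le_one X u).trans_lt ENNReal.one_lt_top)]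
  congr 2
  ext u
  rw [ENNReal.toReal_inv, one_div, Nat.card_coe_set_eq, Set.ncard]
  congr 1
  cases h : (compo X u).encard <;> simp

end IsEdgeSubset

end Graphing

/-- For a graphing `G`, the normalized rank function
`ρ(X) = 1 − E_u(1/|V(G^X_u)|)` on Borel subsets of the edge set is increasing and
submodular: `ρ(X∪Y) + ρ(X∩Y) ≤ ρ(X) + ρ(Y)`. -/
theorem Graphing.rho_mono_and_submodular {J : Type*} [MeasurableSpace J]
    [StandardBorelSpace J] (G : Graphing J) :
    (∀ X Y : Set (J × J), G.IsEdgeSubset X → G.IsEdgeSubset Y → X ⊆ Y →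
        G.rho X ≤ G.rho Y) ∧
    (∀ X Y : Set (J × J), G.IsEdgeSubset X → G.IsEdgeSubset Y →
        G.rho (X ∪ Y) + G.rho (X ∩ Y) ≤ G.rho X + G.rho Y) := by
  refine ⟨fun X Y hX hY hXY => ?_, fun X Y hX hY => ?_⟩
  · rw [hX.rho_eq, hY.rho_eq]
    refine sub_le_sub_left (ENNReal.toReal_mono (lintegral_inv_encard_ne_top G X)
      (lintegral_mono fun u => ENNReal.inv_le_inv.2 (ENat.toENNReal_le.2 ?_))) 1
    exact Set.encard_le_encard (compo_mono hXY u)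
  · have h := hX.lintegral_inv_encard_add_le hY
    have htop := lintegral_inv_encard_ne_top G
    rw [← ENNReal.toReal_le_toReal (ENNReal.add_ne_top.2 ⟨htop X, htop Y⟩)
      (ENNReal.add_ne_top.2 ⟨htop _, htop _⟩), ENNReal.toReal_add (htop X) (htop Y),
      ENNReal.toReal_add (htop _) (htop _)] at h
    rw [hX.rho_eq, hY.rho_eq, (hX.union hY).rho_eq, (hX.inter hY).rho_eq]
    linarith
end
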